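/- arXiv:math/0403438 — 3 statements merged into one kernel-verified Lean document; each statement's English description precedes it below -/
import Mathlib

section
/- Let ℓ : (0,∞) → (0,∞) be slowly varying at ∞ (i.e., for every c > 0, ℓ(ct)/ℓ(t) → 1 as t → ∞), let 0 < α < 1, and let ν̃ be a nonzero Borel measure on (0,1] with ν̃([x,1]) finite for every x > 0 and ν̃([x,1]) x^α / ℓ(1/x) → 1 as x ↓ 0. Define Φ(s) = ∫₀¹ (1 − (1−x)^s) ν̃(dx), which is finite and positive for s > 0. Let M ≥ 1 and let f_0, f_1, …, f_M : (0,∞) → [0,∞) be nondecreasing functions with f_0 ≡ 1, f_m(ρ) → ∞ as ρ → ∞ for each 1 ≤ m ≤ M, and suppose that for each 1 ≤ m ≤ M and every ρ > 0, ∫₀¹ (f_m(ρ) − f_m(ρ(1−x))) ν̃(dx) = m ∫₀¹ (1 − e^{−ρx}) f_{m−1}(ρ(1−x)) ν̃(dx), both integrals being finite. Then f_M(ρ) / (ρ^α ℓ(ρ))^M → Π_{j=1}^{M} (j Γ(1−α) / Φ(αj)) as ρ → ∞. -/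
open Filter MeasureTheory Real

/-!
Write `G ρ = ∫ (1 - e^{-ρx}) ν̃(dx)`. Karamata's Abelian theorem gives
`G ρ ~ Γ(1 - α) ρ^α ℓ(ρ)`, so it suffices to show `f_m ~ G^m ∏_{j ≤ m} j / Φ(αj)` by induction.
The right-hand side of the recursion is `~ m G f_{m-1}`, because contractions by `x` bounded away
from `0` carry only finite mass. On the left, `G^m` is regularly varying of index `αm`, hence
`∫ (G^m(ρ) - G^m(ρ(1-x))) ν̃(dx) ~ Φ(αm) G^m(ρ)`, and a maximum principle for the operator
`F ↦ ∫ (F(ρ) - F(ρ(1-x))) ν̃(dx)` compares `f_m` with constant multiples of `G^m`.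
-/

open Set
open scoped Topology

lemma comp_two_pow_mul_le_of_doubling {g : ℝ → ℝ} {B t₀ : ℝ} (hB : 0 ≤ B) (ht₀ : 0 ≤ t₀)
    (hdouble : ∀ t, t₀ ≤ t → g (2 * t) ≤ B * g t) {t : ℝ} (ht : t₀ ≤ t) (k : ℕ) :
    g (2 ^ k * t) ≤ B ^ k * g t := by
  induction k with
  | zero => simp
  | succ k ih =>
    have hkt : t₀ ≤ 2 ^ k * t :=
      ht.trans (le_mul_of_one_le_left (ht₀.trans ht) (one_le_pow₀ one_le_two))
    calc g (2 ^ (k + 1) * t) = g (2 * (2 ^ k * t)) := by ring_nf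
      _ ≤ B * g (2 ^ k * t) := hdouble _ hkt
      _ ≤ B * (B ^ k * g t) := mul_le_mul_of_nonneg_left ih hB
      _ = B ^ (k + 1) * g t := by ring

/-- `g` is regularly varying at `∞` with index `α`; slow variation is the case `α = 0`. -/
structure IsRegularlyVarying (g : ℝ → ℝ) (α : ℝ) : Prop where
  eventually_pos : ∀ᶠ t in atTop, 0 < g t
  tendsto_div : ∀ c, 0 < c → Tendsto (fun t ↦ g (c * t) / g t) atTop (𝓝 (c ^ α))

namespace IsRegularlyVarying

variable {g h F : ℝ → ℝ} {α β C : ℝ}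

lemma rpow (α : ℝ) : IsRegularlyVarying (fun t ↦ t ^ α) α where
  eventually_pos := (eventually_gt_atTop 0).mono fun _ ht ↦ Real.rpow_pos_of_pos ht α
  tendsto_div c hc := by
    refine tendsto_const_nhds.congr' ?_
    filter_upwards [eventually_gt_atTop 0] with t ht
    rw [Real.mul_rpow hc.le ht.le, mul_div_cancel_right₀ _ (Real.rpow_pos_of_pos ht α).ne']

lemma mul (hg : IsRegularlyVarying g α) (hh : IsRegularlyVarying h β) :
    IsRegularlyVarying (fun t ↦ g t * h t) (α + β) where
  eventually_pos := by
    filter_upwards [hg.eventually_pos, hh.eventually_pos] with t using mul_pos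
  tendsto_div c hc := by
    simpa only [mul_div_mul_comm, Real.rpow_add hc] using
      (hg.tendsto_div c hc).mul (hh.tendsto_div c hc)

lemma rpow_mul (hg : IsRegularlyVarying g 0) (α : ℝ) :
    IsRegularlyVarying (fun t ↦ t ^ α * g t) α := by
  simpa only [add_zero] using (rpow α).mul hg

lemma pow (hg : IsRegularlyVarying g α) (m : ℕ) :
    IsRegularlyVarying (fun t ↦ g t ^ m) (α * m) where
  eventually_pos := hg.eventually_pos.mono fun _ ht ↦ pow_pos ht m
  tendsto_div c hc := by
    simpa only [div_pow, Real.rpow_mul_natCast hc.le] using (hg.tendsto_div c hc).pow m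

lemma tendsto_comp_mul_div (hh : IsRegularlyVarying h β)
    (hF : Tendsto (fun t ↦ F t / h t) atTop (𝓝 C)) {c : ℝ} (hc : 0 < c) :
    Tendsto (fun t ↦ F (c * t) / h t) atTop (𝓝 (C * c ^ β)) := by
  have hct : Tendsto (fun t : ℝ ↦ c * t) atTop atTop := tendsto_id.const_mul_atTop hc
  refine ((hF.comp hct).mul (hh.tendsto_div c hc)).congr' ?_
  filter_upwards [hct.eventually hh.eventually_pos] with t ht
  exact div_mul_div_cancel₀ ht.ne'

lemma of_tendsto_div (hh : IsRegularlyVarying h β) (hC : 0 < C)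
    (hF : Tendsto (fun t ↦ F t / h t) atTop (𝓝 C)) : IsRegularlyVarying F β where
  eventually_pos := by
    filter_upwards [hF.eventually_const_lt hC, hh.eventually_pos] with t hFt ht
    exact (div_pos_iff_of_pos_right ht).1 hFt
  tendsto_div c hc := by
    have hlim := (hh.tendsto_comp_mul_div hF hc).div hF hC.ne'
    rw [mul_div_cancel_left₀ _ hC.ne'] at hlim
    refine hlim.congr' ?_
    filter_upwards [hh.eventually_pos] with t ht
    exact div_div_div_cancel_right₀ ht.ne' _ _

lemma tendsto_atTop (hg : IsRegularlyVarying g α) (hα : 0 < α) {a : ℝ}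
    (hmono : MonotoneOn g (Ici a)) : Tendsto g atTop atTop := by
  have hmax : Monotone fun t ↦ g (max a t) := fun s t hst ↦
    hmono (le_max_left a s) (le_max_left a t) (max_le_max_left a hst)
  have hmax_eq : (fun t ↦ g (max a t)) =ᶠ[atTop] g :=
    (eventually_ge_atTop a).mono fun t ht ↦ congrArg g (max_eq_right ht)
  rcases tendsto_atTop_of_monotone hmax with htop | ⟨l, hl⟩
  · exact htop.congr' hmax_eq
  · replace hl : Tendsto g atTop (𝓝 l) := hl.congr' hmax_eq
    obtain ⟨r, hr, har⟩ := (hg.eventually_pos.and (eventually_ge_atTop a)).exists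
    have hl_pos : 0 < l := hr.trans_le <| ge_of_tendsto hl <|
      (eventually_ge_atTop r).mono fun t ht ↦ hmono har (har.trans ht) ht
    have hone : Tendsto (fun t ↦ g (2 * t) / g t) atTop (𝓝 (l / l)) :=
      (hl.comp (tendsto_id.const_mul_atTop two_pos)).div hl hl_pos.ne'
    have heq := tendsto_nhds_unique hone (hg.tendsto_div 2 two_pos)
    rw [div_self hl_pos.ne'] at heq
    exact absurd heq (Real.one_lt_rpow one_lt_two hα).ne

/- A Potter bound: doubling the argument multiplies `g` by at most `2 ^ β` eventually, and
monotonicity interpolates between the powers of `2`. -/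
lemma eventually_comp_mul_le (hg : IsRegularlyVarying g α) (hmono : MonotoneOn g (Ioi 0))
    (hαβ : α < β) (hβ : 0 ≤ β) :
    ∀ᶠ t in atTop, ∀ v, 0 < v → g (v * t) ≤ (2 ^ β * v ^ β + 1) * g t := by
  have hdouble : ∀ᶠ t in atTop, g (2 * t) ≤ 2 ^ β * g t := by
    have hlt : (2 : ℝ) ^ α < 2 ^ β := Real.rpow_lt_rpow_of_exponent_lt one_lt_two hαβ
    filter_upwards [(hg.tendsto_div 2 two_pos).eventually_lt_const hlt, hg.eventually_pos]
      with t hlt ht using ((div_lt_iff₀ ht).1 hlt).le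
  obtain ⟨t₀, ht₀⟩ := eventually_atTop.1 hdouble
  filter_upwards [eventually_ge_atTop (max t₀ 0), eventually_gt_atTop 0, hg.eventually_pos]
    with t htt₀ ht hgt v hv
  have hvβ : 0 ≤ 2 ^ β * v ^ β := by positivity
  rcases le_or_gt v 1 with hv1 | hv1
  · calc g (v * t) ≤ g t := hmono (mul_pos hv ht) ht (mul_le_of_le_one_left ht.le hv1)
      _ ≤ (2 ^ β * v ^ β + 1) * g t := le_mul_of_one_le_left hgt.le (by linarith)
  · obtain ⟨k, hkv, hvk⟩ := exists_nat_pow_near hv1.le one_lt_two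
    have hpow : ((2 : ℝ) ^ β) ^ k ≤ v ^ β := by
      rw [← Real.rpow_mul_natCast two_pos.le, mul_comm, Real.rpow_natCast_mul two_pos.le]
      exact Real.rpow_le_rpow (by positivity) hkv hβ
    calc g (v * t) ≤ g (2 ^ (k + 1) * t) :=
          hmono (mul_pos hv ht) (mul_pos (by positivity) ht) (by gcongr)
      _ ≤ (2 ^ β) ^ (k + 1) * g t :=
          comp_two_pow_mul_le_of_doubling (by positivity) (le_max_right t₀ 0)
            (fun s hs ↦ ht₀ s ((le_max_left _ _).trans hs)) htt₀ _
      _ = 2 ^ β * (2 ^ β) ^ k * g t := by ring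
      _ ≤ 2 ^ β * v ^ β * g t := by gcongr
      _ ≤ (2 ^ β * v ^ β + 1) * g t := by gcongr; exact le_add_of_nonneg_right zero_le_one

end IsRegularlyVarying

section KaramataAbelian

variable {g : ℝ → ℝ} {α β : ℝ}

lemma integrableOn_potterBound_mul_exp_neg (hβ : β < 1) :
    IntegrableOn (fun u : ℝ ↦ (2 ^ β * u⁻¹ ^ β + 1) * exp (-u)) (Ioi 0) := by
  refine IntegrableOn.congr_fun (((Real.GammaIntegral_convergent (sub_pos.2 hβ)).const_mul
    (2 ^ β)).add (Real.GammaIntegral_convergent one_pos)) (fun u hu ↦ ?_) measurableSet_Ioi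
  rw [mem_Ioi] at hu
  simp only [Pi.add_apply, sub_self, Real.rpow_zero, sub_sub_cancel_left, Real.inv_rpow hu.le,
    Real.rpow_neg hu.le]
  ring

lemma aestronglyMeasurable_comp_inv_mul (hmono : MonotoneOn g (Ioi 0)) {t : ℝ} (ht : 0 < t) :
    AEStronglyMeasurable (fun u ↦ g (u⁻¹ * t)) (volume.restrict (Ioi 0)) := by
  have hanti : AntitoneOn (fun u ↦ g (u⁻¹ * t)) (Ioi 0) := fun u hu v hv huv ↦
    hmono (mul_pos (inv_pos.2 hv) ht) (mul_pos (inv_pos.2 hu) ht)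
      (mul_le_mul_of_nonneg_right (inv_anti₀ hu huv) ht.le)
  exact (aemeasurable_restrict_of_antitoneOn measurableSet_Ioi hanti).aestronglyMeasurable

namespace IsRegularlyVarying

lemma eventually_norm_comp_inv_mul_le (hg : IsRegularlyVarying g α)
    (hmono : MonotoneOn g (Ioi 0)) (hnonneg : ∀ t, 0 < t → 0 ≤ g t)
    (hαβ : α < β) (hβ : 0 ≤ β) :
    ∀ᶠ t in atTop, ∀ᵐ u ∂volume.restrict (Ioi 0),
      ‖g (u⁻¹ * t) * exp (-u)‖ ≤ g t * ((2 ^ β * u⁻¹ ^ β + 1) * exp (-u)) := by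
  filter_upwards [hg.eventually_comp_mul_le hmono hαβ hβ, eventually_gt_atTop 0]
    with t hpotter ht
  filter_upwards [ae_restrict_mem measurableSet_Ioi] with u hu
  have hu' : 0 < u⁻¹ := inv_pos.2 hu
  rw [Real.norm_of_nonneg (mul_nonneg (hnonneg _ (mul_pos hu' ht)) (exp_nonneg _)), ← mul_assoc,
    mul_comm (g t)]
  exact mul_le_mul_of_nonneg_right (hpotter u⁻¹ hu') (exp_nonneg _)

lemma eventually_integrableOn_comp_inv_mul (hg : IsRegularlyVarying g α)
    (hmono : MonotoneOn g (Ioi 0)) (hnonneg : ∀ t, 0 < t → 0 ≤ g t) (hα0 : 0 ≤ α) (hα1 : α < 1) :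
    ∀ᶠ t in atTop, IntegrableOn (fun u ↦ g (u⁻¹ * t) * exp (-u)) (Ioi 0) := by
  obtain ⟨β, hαβ, hβ1⟩ := exists_between hα1
  filter_upwards [hg.eventually_norm_comp_inv_mul_le hmono hnonneg hαβ (hα0.trans hαβ.le),
    eventually_gt_atTop 0] with t hbound ht
  exact ((integrableOn_potterBound_mul_exp_neg hβ1).const_mul (g t)).mono'
    ((aestronglyMeasurable_comp_inv_mul hmono ht).mul (by fun_prop)) hbound

lemma tendsto_integral_comp_inv_mul_div (hg : IsRegularlyVarying g α)
    (hmono : MonotoneOn g (Ioi 0)) (hnonneg : ∀ t, 0 < t → 0 ≤ g t) (hα0 : 0 ≤ α) (hα1 : α < 1) :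
    Tendsto (fun t ↦ (∫ u in Ioi 0, g (u⁻¹ * t) * exp (-u)) / g t) atTop (𝓝 (Gamma (1 - α))) := by
  obtain ⟨β, hαβ, hβ1⟩ := exists_between hα1
  rw [Real.Gamma_eq_integral (sub_pos.2 hα1)]
  simp_rw [← integral_div]
  refine tendsto_integral_filter_of_dominated_convergence _ ?_ ?_
    (integrableOn_potterBound_mul_exp_neg hβ1) ?_
  · filter_upwards [eventually_gt_atTop 0] with t ht
    exact ((aestronglyMeasurable_comp_inv_mul hmono ht).mul (by fun_prop)).mul
      aestronglyMeasurable_const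
  · filter_upwards [hg.eventually_norm_comp_inv_mul_le hmono hnonneg hαβ (hα0.trans hαβ.le),
      hg.eventually_pos] with t hbound hgt
    filter_upwards [hbound] with u hu
    rwa [norm_div, Real.norm_of_nonneg hgt.le, div_le_iff₀' hgt]
  · filter_upwards [ae_restrict_mem measurableSet_Ioi] with u hu
    rw [mem_Ioi] at hu
    rw [sub_sub_cancel_left, Real.rpow_neg hu.le, ← Real.inv_rpow hu.le, mul_comm]
    simpa only [div_mul_eq_mul_div] using
      (hg.tendsto_div u⁻¹ (inv_pos.2 hu)).mul_const (exp (-u))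

end IsRegularlyVarying

end KaramataAbelian

/-- The tail of `μ` as a function of the inverse `t` of the jump size, so that its behaviour near
the origin is regular variation at `∞`. -/
noncomputable def tailFunction (μ : Measure ℝ) (t : ℝ) : ℝ := μ.real (Ici t⁻¹)

/-- The Bernstein function `ρ ↦ ∫ (1 - e^{-ρx}) μ(dx)` with Lévy measure `μ`. -/
noncomputable def bernsteinFunction (μ : Measure ℝ) (ρ : ℝ) : ℝ := ∫ x, (1 - exp (-(ρ * x))) ∂μ

section Tail

variable {μ : Measure ℝ}

lemma tailFunction_nonneg (μ : Measure ℝ) (t : ℝ) : 0 ≤ tailFunction μ t := measureReal_nonneg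

lemma tailFunction_monotoneOn (hfin : ∀ x, 0 < x → μ (Ici x) ≠ ⊤) :
    MonotoneOn (tailFunction μ) (Ioi 0) := fun _ hs _ ht hst ↦
  measureReal_mono (Ici_subset_Ici.2 (inv_anti₀ hs hst)) (hfin _ (inv_pos.2 ht))

lemma lintegral_one_sub_exp_neg {Ω : Type*} [MeasurableSpace Ω] {P : Measure Ω} {X : Ω → ℝ}
    (hX0 : 0 ≤ᵐ[P] X) (hX : AEMeasurable X P) :
    ∫⁻ ω, ENNReal.ofReal (1 - exp (-X ω)) ∂P =
      ∫⁻ u in Ioi 0, P {ω | u ≤ X ω} * ENNReal.ofReal (exp (-u)) := by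
  have hexp (y : ℝ) : ∫ u in (0 : ℝ)..y, exp (-u) = 1 - exp (-y) := by
    rw [intervalIntegral.integral_comp_neg (fun u ↦ exp u), integral_exp, neg_zero, exp_zero]
  simp_rw [← hexp]
  exact lintegral_comp_eq_lintegral_meas_le_mul P hX0 hX
    (fun _ _ ↦ Continuous.intervalIntegrable (by fun_prop) _ _)
    (ae_of_all _ fun _ ↦ exp_nonneg _)

lemma lintegral_one_sub_exp_neg_mul (hpos : ∀ᵐ x ∂μ, 0 ≤ x)
    (hfin : ∀ x, 0 < x → μ (Ici x) ≠ ⊤) {ρ : ℝ} (hρ : 0 < ρ) :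
    ∫⁻ x, ENNReal.ofReal (1 - exp (-(ρ * x))) ∂μ =
      ∫⁻ u in Ioi 0, ENNReal.ofReal (tailFunction μ (u⁻¹ * ρ) * exp (-u)) := by
  rw [lintegral_one_sub_exp_neg (hpos.mono fun x hx ↦ mul_nonneg hρ.le hx) (by fun_prop)]
  refine setLIntegral_congr_fun measurableSet_Ioi fun u hu ↦ ?_
  have hset : {x | u ≤ ρ * x} = Ici (u⁻¹ * ρ)⁻¹ := by
    ext x
    rw [mem_ofPred_eq, mem_Ici, mul_inv, inv_inv, ← div_eq_mul_inv, div_le_iff₀' hρ]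
  have hne : μ (Ici (u⁻¹ * ρ)⁻¹) ≠ ⊤ := hfin _ (inv_pos.2 (mul_pos (inv_pos.2 hu) hρ))
  simp only [hset, tailFunction]
  rw [ENNReal.ofReal_mul measureReal_nonneg, ofReal_measureReal hne]

lemma one_sub_exp_neg_mul_nonneg {ρ x : ℝ} (hρ : 0 ≤ ρ) (hx : 0 ≤ x) :
    0 ≤ 1 - exp (-(ρ * x)) :=
  sub_nonneg.2 (exp_le_one_iff.2 (neg_nonpos.2 (mul_nonneg hρ hx)))

lemma eventually_integrable_one_sub_exp_neg {α : ℝ} (hpos : ∀ᵐ x ∂μ, 0 ≤ x)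
    (hfin : ∀ x, 0 < x → μ (Ici x) ≠ ⊤) (hα0 : 0 ≤ α) (hα1 : α < 1)
    (htail : IsRegularlyVarying (tailFunction μ) α) :
    ∀ᶠ ρ in atTop, Integrable (fun x ↦ 1 - exp (-(ρ * x))) μ := by
  filter_upwards [htail.eventually_integrableOn_comp_inv_mul (tailFunction_monotoneOn hfin)
    (fun t _ ↦ tailFunction_nonneg μ t) hα0 hα1, eventually_gt_atTop 0] with ρ hint hρ
  refine ⟨by fun_prop, ?_⟩
  rw [hasFiniteIntegral_iff_ofReal (hpos.mono fun x hx ↦ one_sub_exp_neg_mul_nonneg hρ.le hx),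
    lintegral_one_sub_exp_neg_mul hpos hfin hρ, ← hasFiniteIntegral_iff_ofReal
      (ae_of_all _ fun _ ↦ mul_nonneg (tailFunction_nonneg μ _) (exp_nonneg _))]
  exact hint.2

lemma bernsteinFunction_eq_integral_tailFunction (hpos : ∀ᵐ x ∂μ, 0 ≤ x)
    (hfin : ∀ x, 0 < x → μ (Ici x) ≠ ⊤) {ρ : ℝ} (hρ : 0 < ρ) :
    bernsteinFunction μ ρ = ∫ u in Ioi 0, tailFunction μ (u⁻¹ * ρ) * exp (-u) := by
  rw [bernsteinFunction, integral_eq_lintegral_of_nonneg_ae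
      (hpos.mono fun x hx ↦ one_sub_exp_neg_mul_nonneg hρ.le hx) (by fun_prop),
    lintegral_one_sub_exp_neg_mul hpos hfin hρ, integral_eq_lintegral_of_nonneg_ae
      (ae_of_all _ fun _ ↦ mul_nonneg (tailFunction_nonneg μ _) (exp_nonneg _))
      ((aestronglyMeasurable_comp_inv_mul (tailFunction_monotoneOn hfin) hρ).mul (by fun_prop))]

lemma tendsto_bernsteinFunction_div_tailFunction {α : ℝ} (hpos : ∀ᵐ x ∂μ, 0 ≤ x)
    (hfin : ∀ x, 0 < x → μ (Ici x) ≠ ⊤) (hα0 : 0 ≤ α) (hα1 : α < 1)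
    (htail : IsRegularlyVarying (tailFunction μ) α) :
    Tendsto (fun ρ ↦ bernsteinFunction μ ρ / tailFunction μ ρ) atTop (𝓝 (Gamma (1 - α))) := by
  refine (htail.tendsto_integral_comp_inv_mul_div (tailFunction_monotoneOn hfin)
    (fun t _ ↦ tailFunction_nonneg μ t) hα0 hα1).congr' ?_
  filter_upwards [eventually_gt_atTop 0] with ρ hρ
  rw [bernsteinFunction_eq_integral_tailFunction hpos hfin hρ]

theorem tendsto_bernsteinFunction_div {h : ℝ → ℝ} {α C : ℝ} (hpos : ∀ᵐ x ∂μ, 0 ≤ x)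
    (hfin : ∀ x, 0 < x → μ (Ici x) ≠ ⊤) (hα0 : 0 ≤ α) (hα1 : α < 1)
    (hh : IsRegularlyVarying h α) (hC : 0 < C)
    (htail : Tendsto (fun t ↦ tailFunction μ t / h t) atTop (𝓝 C)) :
    Tendsto (fun ρ ↦ bernsteinFunction μ ρ / h ρ) atTop (𝓝 (Gamma (1 - α) * C)) := by
  have htail_rv := hh.of_tendsto_div hC htail
  refine ((tendsto_bernsteinFunction_div_tailFunction hpos hfin hα0 hα1 htail_rv).mul
    htail).congr' ?_
  filter_upwards [htail_rv.eventually_pos] with ρ hρ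
  exact div_mul_div_cancel₀ hρ.ne'

end Tail

lemma mul_one_sub_exp_neg_le {c : ℝ} (hc : c ∈ Icc 0 1) (y : ℝ) :
    c * (1 - exp (-y)) ≤ 1 - exp (-(c * y)) := by
  have hconv := convexOn_exp.2 (mem_univ (-y)) (mem_univ 0) hc.1 (sub_nonneg.2 hc.2) (by ring)
  simp only [smul_eq_mul, mul_zero, add_zero, exp_zero, mul_one, mul_neg] at hconv
  linarith

/-- `μ` is the Lévy measure of a subordinator all of whose jumps lie in `(0, 1]`. -/
structure IsUnitLevyMeasure (μ : Measure ℝ) : Prop where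
  ae_mem : ∀ᵐ x ∂μ, x ∈ Ioc (0 : ℝ) 1
  integrable_id : Integrable (fun x ↦ x) μ

/-- The exponent `Φ(s) = ∫ (1 - (1 - x)^s) μ(dx)`, i.e. the Laplace exponent of the subordinator
whose jumps are `-log (1 - x)`. -/
noncomputable def laplaceExponent (μ : Measure ℝ) (s : ℝ) : ℝ := ∫ x, (1 - (1 - x) ^ s) ∂μ

/-- The mean decrease of `F` under the random contractions `ρ ↦ ρ (1 - x)`; this is minus the
generator of the associated contraction process, applied to `F`. -/
noncomputable def contractionLoss (μ : Measure ℝ) (F : ℝ → ℝ) (ρ : ℝ) : ℝ :=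
  ∫ x, (F ρ - F (ρ * (1 - x))) ∂μ

/-- The mean of `F` after contraction when a contraction by `1 - x` is only counted with the
probability `1 - e^{-ρx}` that a Poisson process of rate `ρ` hits an interval of length `x`; this
is the source term of the factorial moment recursion. -/
noncomputable def hitMean (μ : Measure ℝ) (F : ℝ → ℝ) (ρ : ℝ) : ℝ :=
  ∫ x, (1 - exp (-(ρ * x))) * F (ρ * (1 - x)) ∂μ

namespace IsUnitLevyMeasure

variable {μ : Measure ℝ}

lemma of_integrable {ρ : ℝ} (hmem : ∀ᵐ x ∂μ, x ∈ Ioc (0 : ℝ) 1) (hρ : 0 < ρ)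
    (hint : Integrable (fun x ↦ 1 - exp (-(ρ * x))) μ) : IsUnitLevyMeasure μ where
  ae_mem := hmem
  integrable_id := by
    have hpos : 0 < 1 - exp (-ρ) := sub_pos.2 (exp_lt_one_iff.2 (neg_lt_zero.2 hρ))
    refine (hint.div_const (1 - exp (-ρ))).mono' (by fun_prop) (hmem.mono fun x hx ↦ ?_)
    rw [Real.norm_of_nonneg hx.1.le, le_div_iff₀ hpos, mul_comm ρ]
    exact mul_one_sub_exp_neg_le ⟨hx.1.le, hx.2⟩ ρ

lemma integrable_one_sub_exp_neg (hμ : IsUnitLevyMeasure μ) {ρ : ℝ} (hρ : 0 ≤ ρ) :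
    Integrable (fun x ↦ 1 - exp (-(ρ * x))) μ := by
  refine (hμ.integrable_id.const_mul ρ).mono' (by fun_prop) (hμ.ae_mem.mono fun x hx ↦ ?_)
  rw [Real.norm_of_nonneg (one_sub_exp_neg_mul_nonneg hρ hx.1.le), sub_le_comm]
  exact one_sub_le_exp_neg _

lemma bernsteinFunction_nonneg (hμ : IsUnitLevyMeasure μ) {ρ : ℝ} (hρ : 0 ≤ ρ) :
    0 ≤ bernsteinFunction μ ρ :=
  integral_nonneg_of_ae (hμ.ae_mem.mono fun _ hx ↦ one_sub_exp_neg_mul_nonneg hρ hx.1.le)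

lemma bernsteinFunction_monotoneOn (hμ : IsUnitLevyMeasure μ) :
    MonotoneOn (bernsteinFunction μ) (Ici 0) := fun ρ hρ σ hσ hρσ ↦ by
  refine integral_mono_ae (hμ.integrable_one_sub_exp_neg hρ) (hμ.integrable_one_sub_exp_neg hσ)
    (hμ.ae_mem.mono fun x hx ↦ ?_)
  have hx0 : 0 ≤ x := hx.1.le
  dsimp only
  gcongr

lemma mul_bernsteinFunction_le (hμ : IsUnitLevyMeasure μ) {c ρ : ℝ} (hc : c ∈ Icc 0 1)
    (hρ : 0 ≤ ρ) : c * bernsteinFunction μ ρ ≤ bernsteinFunction μ (ρ * c) := by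
  rw [bernsteinFunction, ← integral_const_mul]
  refine integral_mono ((hμ.integrable_one_sub_exp_neg hρ).const_mul c)
    (hμ.integrable_one_sub_exp_neg (mul_nonneg hρ hc.1)) fun x ↦ ?_
  simpa only [mul_right_comm ρ c x, mul_comm c] using mul_one_sub_exp_neg_le hc (ρ * x)

lemma aestronglyMeasurable_comp_mul_one_sub (hμ : IsUnitLevyMeasure μ) {h : ℝ → ℝ}
    (hh : MonotoneOn h (Ici 0)) {ρ : ℝ} (hρ : 0 ≤ ρ) :
    AEStronglyMeasurable (fun x ↦ h (ρ * (1 - x))) μ := by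
  have hmem {x : ℝ} (hx : x ≤ 1) : ρ * (1 - x) ∈ Ici 0 := mul_nonneg hρ (sub_nonneg.2 hx)
  have hanti : AntitoneOn (fun x ↦ h (ρ * (1 - x))) (Iic 1) := fun x hx y hy hxy ↦
    hh (hmem hy) (hmem hx) (by gcongr)
  rw [← Measure.restrict_eq_self_of_ae_mem (hμ.ae_mem.mono fun x hx ↦ mem_Iic.2 hx.2)]
  exact (aemeasurable_restrict_of_antitoneOn measurableSet_Iic hanti).aestronglyMeasurable

lemma laplaceExponent_pos (hμ : IsUnitLevyMeasure μ) (hne : μ ≠ 0) {s : ℝ} (hs : 0 < s) :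
    0 < laplaceExponent μ s := by
  have hlt_one {x : ℝ} (hx : x ∈ Ioc (0 : ℝ) 1) : (1 - x) ^ s < 1 :=
    Real.rpow_lt_one (sub_nonneg.2 hx.2) (sub_lt_self 1 hx.1) hs
  have hnonneg : 0 ≤ᵐ[μ] fun x ↦ 1 - (1 - x) ^ s :=
    hμ.ae_mem.mono fun x hx ↦ sub_nonneg.2 (hlt_one hx).le
  have hint : Integrable (fun x ↦ 1 - (1 - x) ^ s) μ := by
    refine (hμ.integrable_id.const_mul (max s 1)).mono' (by fun_prop (disch := exact hs.le)) ?_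
    filter_upwards [hμ.ae_mem, hnonneg] with x hx hx_nonneg
    rw [Real.norm_of_nonneg hx_nonneg, sub_le_comm]
    calc 1 - max s 1 * x = 1 + max s 1 * -x := by ring
      _ ≤ (1 + -x) ^ max s 1 :=
        one_add_mul_self_le_rpow_one_add (neg_le_neg hx.2) (le_max_right s 1)
      _ ≤ (1 - x) ^ s := Real.rpow_le_rpow_of_exponent_ge' (sub_nonneg.2 hx.2)
        (sub_le_self 1 hx.1.le) hs.le (le_max_left s 1)
  rw [laplaceExponent, integral_pos_iff_support_of_nonneg_ae hnonneg hint, pos_iff_ne_zero]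
  intro hzero
  refine hne (ae_eq_bot.1 (eventually_false_iff_eq_bot.1 ?_))
  filter_upwards [hμ.ae_mem, measure_eq_zero_iff_ae_notMem.1 hzero] with x hx hsupp
  exact hsupp (sub_pos.2 (hlt_one hx)).ne'

lemma tendsto_setIntegral_Iio_id (hμ : IsUnitLevyMeasure μ) :
    Tendsto (fun ε ↦ ∫ x in Iio ε, x ∂μ) (𝓝[>] 0) (𝓝 0) := by
  simp_rw [← integral_indicator measurableSet_Iio]
  suffices Tendsto (fun ε ↦ ∫ x, (Iio ε).indicator (fun x ↦ x) x ∂μ) (𝓝[>] 0) (𝓝 (∫ _, 0 ∂μ)) by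
    simpa only [integral_zero] using this
  refine tendsto_integral_filter_of_dominated_convergence (fun x ↦ x) (.of_forall fun ε ↦
    aestronglyMeasurable_id.indicator measurableSet_Iio) (.of_forall fun ε ↦ ?_)
    hμ.integrable_id ?_
  · filter_upwards [hμ.ae_mem] with x hx
    exact (norm_indicator_le_norm_self _ x).trans_eq (Real.norm_of_nonneg hx.1.le)
  · filter_upwards [hμ.ae_mem] with x hx
    refine tendsto_const_nhds.congr' ?_
    filter_upwards [nhdsWithin_le_nhds (Iio_mem_nhds hx.1)] with ε hε
    exact (indicator_of_notMem (notMem_Iio.2 (mem_Iio.1 hε).le) _).symm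

end IsUnitLevyMeasure

/-- `h` is nondecreasing and nonnegative on `[0, ∞)`, and contracting the argument by the factor
`1 - x` decreases `h` by at most the fraction `K x`. These are the comparison functions for which
`contractionLoss` is under control near `x = 0`. -/
structure IsContractionLipschitz (h : ℝ → ℝ) (K : ℝ) : Prop where
  const_nonneg : 0 ≤ K
  monotoneOn : MonotoneOn h (Ici 0)
  nonneg : ∀ ρ, 0 ≤ ρ → 0 ≤ h ρ
  sub_le : ∀ ρ, 0 ≤ ρ → ∀ x ∈ Icc (0 : ℝ) 1, h ρ - h (ρ * (1 - x)) ≤ K * x * h ρ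

lemma mul_one_sub_le_self {ρ x : ℝ} (hρ : 0 ≤ ρ) (hx : 0 ≤ x) : ρ * (1 - x) ≤ ρ :=
  mul_le_of_le_one_right hρ (sub_le_self 1 hx)

namespace IsContractionLipschitz

variable {h h₁ h₂ : ℝ → ℝ} {K K₁ K₂ : ℝ} {μ : Measure ℝ}

lemma one : IsContractionLipschitz (fun _ ↦ 1) 0 where
  const_nonneg := le_rfl
  monotoneOn := monotoneOn_const
  nonneg _ _ := zero_le_one
  sub_le _ _ _ _ := by simp

lemma comp_mul_one_sub_le (hh : IsContractionLipschitz h K) {ρ x : ℝ} (hρ : 0 ≤ ρ)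
    (hx : x ∈ Icc (0 : ℝ) 1) : h (ρ * (1 - x)) ≤ h ρ :=
  hh.monotoneOn (mul_nonneg hρ (sub_nonneg.2 hx.2)) hρ (mul_one_sub_le_self hρ hx.1)

lemma mul (hh₁ : IsContractionLipschitz h₁ K₁) (hh₂ : IsContractionLipschitz h₂ K₂) :
    IsContractionLipschitz (fun ρ ↦ h₁ ρ * h₂ ρ) (K₁ + K₂) where
  const_nonneg := add_nonneg hh₁.const_nonneg hh₂.const_nonneg
  monotoneOn := hh₁.monotoneOn.mul hh₂.monotoneOn hh₁.nonneg hh₂.nonneg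
  nonneg ρ hρ := mul_nonneg (hh₁.nonneg ρ hρ) (hh₂.nonneg ρ hρ)
  sub_le ρ hρ x hx := by
    calc h₁ ρ * h₂ ρ - h₁ (ρ * (1 - x)) * h₂ (ρ * (1 - x))
      _ = (h₁ ρ - h₁ (ρ * (1 - x))) * h₂ ρ + h₁ (ρ * (1 - x)) * (h₂ ρ - h₂ (ρ * (1 - x))) := by
        ring
      _ ≤ K₁ * x * h₁ ρ * h₂ ρ + h₁ ρ * (K₂ * x * h₂ ρ) := by
        refine add_le_add (mul_le_mul_of_nonneg_right (hh₁.sub_le ρ hρ x hx) (hh₂.nonneg ρ hρ))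
          (mul_le_mul (hh₁.comp_mul_one_sub_le hρ hx) (hh₂.sub_le ρ hρ x hx) ?_
            (hh₁.nonneg ρ hρ))
        exact sub_nonneg.2 (hh₂.comp_mul_one_sub_le hρ hx)
      _ = (K₁ + K₂) * x * (h₁ ρ * h₂ ρ) := by ring

lemma pow (hh : IsContractionLipschitz h K) (m : ℕ) :
    IsContractionLipschitz (fun ρ ↦ h ρ ^ m) (m * K) := by
  induction m with
  | zero => simpa using one
  | succ m ih => simpa only [pow_succ, Nat.cast_succ, add_one_mul] using ih.mul hh

lemma tendsto_nhdsGT (hh : IsContractionLipschitz h K) {s : ℝ} (hs : 0 < s) :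
    Tendsto h (𝓝[>] s) (𝓝 (h s)) := by
  have hupper : Tendsto (fun t ↦ h s + K * (1 - s / t) * h (2 * s)) (𝓝[>] s) (𝓝 (h s)) := by
    have hcont : ContinuousAt (fun t ↦ h s + K * (1 - s / t) * h (2 * s)) s := by
      fun_prop (disch := exact hs.ne')
    simpa [div_self hs.ne'] using hcont.tendsto.mono_left nhdsWithin_le_nhds
  refine tendsto_of_tendsto_of_tendsto_of_le_of_le' tendsto_const_nhds hupper ?_ ?_
  · filter_upwards [self_mem_nhdsWithin] with t hst
    exact hh.monotoneOn hs.le (hs.trans hst).le (le_of_lt hst)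
  · filter_upwards [Ioo_mem_nhdsGT (lt_two_mul_self hs)] with t ⟨hst, ht2⟩
    have ht : 0 < t := hs.trans hst
    have hx : 1 - s / t ∈ Icc (0 : ℝ) 1 :=
      ⟨sub_nonneg.2 ((div_le_one ht).2 hst.le), sub_le_self 1 (div_nonneg hs.le ht.le)⟩
    have hloss := hh.sub_le t ht.le _ hx
    rw [sub_sub_cancel, mul_div_cancel₀ s ht.ne'] at hloss
    calc h t ≤ h s + K * (1 - s / t) * h t := by linarith
      _ ≤ h s + K * (1 - s / t) * h (2 * s) := by
        gcongr
        · exact mul_nonneg hh.const_nonneg hx.1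
        · exact hh.monotoneOn ht.le (mem_Ici.2 (by positivity)) ht2.le

lemma ae_norm_sub_le (hh : IsContractionLipschitz h K) (hμ : IsUnitLevyMeasure μ) {ρ : ℝ}
    (hρ : 0 ≤ ρ) : ∀ᵐ x ∂μ, ‖h ρ - h (ρ * (1 - x))‖ ≤ K * x * h ρ := by
  filter_upwards [hμ.ae_mem] with x hx
  have hx' : x ∈ Icc (0 : ℝ) 1 := Ioc_subset_Icc_self hx
  rw [Real.norm_of_nonneg (sub_nonneg.2 (hh.comp_mul_one_sub_le hρ hx'))]
  exact hh.sub_le ρ hρ x hx'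

lemma aestronglyMeasurable_sub (hh : IsContractionLipschitz h K) (hμ : IsUnitLevyMeasure μ)
    {ρ : ℝ} (hρ : 0 ≤ ρ) : AEStronglyMeasurable (fun x ↦ h ρ - h (ρ * (1 - x))) μ :=
  aestronglyMeasurable_const.sub (hμ.aestronglyMeasurable_comp_mul_one_sub hh.monotoneOn hρ)

lemma integrable_sub (hh : IsContractionLipschitz h K) (hμ : IsUnitLevyMeasure μ) {ρ : ℝ}
    (hρ : 0 ≤ ρ) : Integrable (fun x ↦ h ρ - h (ρ * (1 - x))) μ :=
  ((hμ.integrable_id.const_mul K).mul_const (h ρ)).mono' (hh.aestronglyMeasurable_sub hμ hρ)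
    (hh.ae_norm_sub_le hμ hρ)

lemma tendsto_contractionLoss_div (hh : IsContractionLipschitz h K) (hμ : IsUnitLevyMeasure μ)
    {β : ℝ} (hβ : 0 < β) (hhβ : IsRegularlyVarying h β) :
    Tendsto (fun ρ ↦ contractionLoss μ h ρ / h ρ) atTop (𝓝 (laplaceExponent μ β)) := by
  simp only [contractionLoss, ← integral_div]
  refine tendsto_integral_filter_of_dominated_convergence (fun x ↦ K * x) ?_ ?_
    (hμ.integrable_id.const_mul K) ?_
  · filter_upwards [eventually_ge_atTop 0] with ρ hρ
    exact (hh.aestronglyMeasurable_sub hμ hρ).mul aestronglyMeasurable_const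
  · filter_upwards [eventually_ge_atTop 0, hhβ.eventually_pos] with ρ hρ hpos
    filter_upwards [hh.ae_norm_sub_le hμ hρ] with x hx
    rwa [norm_div, Real.norm_of_nonneg hpos.le, div_le_iff₀ hpos]
  · filter_upwards [hμ.ae_mem] with x hx
    have hratio : Tendsto (fun ρ ↦ h (ρ * (1 - x)) / h ρ) atTop (𝓝 ((1 - x) ^ β)) := by
      rcases hx.2.lt_or_eq with hx1 | rfl
      · simpa only [mul_comm] using hhβ.tendsto_div (1 - x) (sub_pos.2 hx1)
      · simpa [Real.zero_rpow hβ.ne'] using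
          (hhβ.tendsto_atTop hβ hh.monotoneOn).const_div_atTop (h 0)
    refine (hratio.const_sub 1).congr' ?_
    filter_upwards [hhβ.eventually_pos] with ρ hpos
    rw [sub_div, div_self hpos.ne']

end IsContractionLipschitz

lemma IsUnitLevyMeasure.isContractionLipschitz_bernsteinFunction {μ : Measure ℝ}
    (hμ : IsUnitLevyMeasure μ) : IsContractionLipschitz (bernsteinFunction μ) 1 where
  const_nonneg := zero_le_one
  monotoneOn := hμ.bernsteinFunction_monotoneOn
  nonneg _ := hμ.bernsteinFunction_nonneg
  sub_le ρ hρ x hx := by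
    linarith [hμ.mul_bernsteinFunction_le (c := 1 - x) ⟨sub_nonneg.2 hx.2, sub_le_self 1 hx.1⟩ hρ]

lemma exists_first_exceedance {D : ℝ → ℝ} {T a b : ℝ} (hb : 0 ≤ b) (hDb : T < D b)
    (hle : ∀ r, 0 ≤ r → r ≤ a → D r ≤ T) :
    ∃ s, a ≤ s ∧ (∀ r, 0 ≤ r → r < s → D r ≤ T) ∧ ∀ t, s < t → ∃ r ∈ Ico s t, T < D r := by
  obtain ⟨s, hs⟩ := Real.exists_isGLB (s := {r | 0 ≤ r ∧ T < D r}) ⟨b, hb, hDb⟩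
    ⟨0, fun r hr ↦ hr.1⟩
  refine ⟨s, hs.2 fun r hr ↦ ?_, fun r hr hrs ↦ ?_, fun t hst ↦ ?_⟩
  · exact (lt_of_not_ge fun hra ↦ (hle r hr.1 hra).not_gt hr.2).le
  · exact le_of_not_gt fun hDr ↦ hrs.not_ge (hs.1 ⟨hr, hDr⟩)
  · obtain ⟨r, hr, hsr, hrt⟩ := hs.exists_between hst
    exact ⟨r, ⟨hsr, hrt⟩, hr.2⟩

section Comparison

variable {μ : Measure ℝ} {F h : ℝ → ℝ} {K c : ℝ}

lemma mul_sub_sub_indicator_le (hh : IsContractionLipschitz h K) (hF : MonotoneOn F (Ioi 0))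
    (hc : 0 ≤ c) {T ε r : ℝ} (hr : 0 < r) (hε : ε < 1) (hT : T < F r - c * h r)
    (hT_le : ∀ t, 0 ≤ t → t ≤ r * (1 - ε) → F t - c * h t ≤ T) {x : ℝ} (hx : x ∈ Ioc (0 : ℝ) 1) :
    c * (h r - h (r * (1 - x))) - c * K * h r * (Iio ε).indicator (fun x ↦ x) x ≤
      F r - F (r * (1 - x)) := by
  rcases lt_or_ge x ε with hxε | hεx
  · have hle : F (r * (1 - x)) ≤ F r :=
      hF (mul_pos hr (sub_pos.2 (hxε.trans hε))) hr (mul_one_sub_le_self hr.le hx.1.le)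
    have hloss := mul_le_mul_of_nonneg_left (hh.sub_le r hr.le x ⟨hx.1.le, hx.2⟩) hc
    rw [indicator_of_mem (mem_Iio.2 hxε)]
    linarith
  · have hle := hT_le (r * (1 - x)) (mul_nonneg hr.le (sub_nonneg.2 hx.2)) (by gcongr)
    rw [indicator_of_notMem (notMem_Iio.2 hεx), mul_zero]
    linarith

lemma const_mul_contractionLoss_sub_le (hμ : IsUnitLevyMeasure μ)
    (hh : IsContractionLipschitz h K) (hF : MonotoneOn F (Ioi 0)) (hc : 0 ≤ c) {T ε r : ℝ}
    (hr : 0 < r) (hint : Integrable (fun x ↦ F r - F (r * (1 - x))) μ)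
    (hε : ε < 1) (hT : T < F r - c * h r)
    (hT_le : ∀ t, 0 ≤ t → t ≤ r * (1 - ε) → F t - c * h t ≤ T) :
    c * contractionLoss μ h r - c * K * h r * ∫ x in Iio ε, x ∂μ ≤ contractionLoss μ F r := by
  have hindicator : Integrable ((Iio ε).indicator (fun x ↦ x)) μ :=
    hμ.integrable_id.indicator measurableSet_Iio
  have hloss := (hh.integrable_sub hμ hr.le).const_mul c
  rw [contractionLoss, ← integral_indicator measurableSet_Iio, ← integral_const_mul,
    ← integral_const_mul, ← integral_sub hloss (hindicator.const_mul _)]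
  exact integral_mono_ae (hloss.sub (hindicator.const_mul _)) hint (hμ.ae_mem.mono fun x hx ↦
    mul_sub_sub_indicator_le hh hF hc hr hε hT hT_le hx)

/- Maximum principle. If `F - c h` first exceeds `T` near `s`, pick `r ≥ s` just beyond `s` with
`T < (F - c h) r`: contractions by `x ≥ ε` lead back below `T`, and those by `x < ε` raise `F - c h`
by at most `c K x h r`, which the margin `δ h r` absorbs. The value `F 0` enters `T` because `x = 1`
contracts to `0`, where `F` is not controlled by monotonicity. -/
lemma exists_le_const_mul_add_of_contractionLoss_le (hμ : IsUnitLevyMeasure μ)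
    (hh : IsContractionLipschitz h K)
    (hF : MonotoneOn F (Ioi 0)) (hint : ∀ ρ, 0 < ρ → Integrable (fun x ↦ F ρ - F (ρ * (1 - x))) μ)
    (hpos : ∀ᶠ ρ in atTop, 0 < h ρ) (hc : 0 ≤ c) {δ : ℝ} (hδ : 0 < δ)
    (hloss : ∀ᶠ ρ in atTop, contractionLoss μ F ρ ≤ c * contractionLoss μ h ρ - δ * h ρ) :
    ∃ T, ∀ ρ, 0 < ρ → F ρ ≤ c * h ρ + T := by
  obtain ⟨ρ₀, hρ₀_loss, hρ₀⟩ := ((eventually_forall_ge_atTop.2 (hpos.and hloss)).and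
    (eventually_gt_atTop 0)).exists
  refine ⟨max (F 0) (F ρ₀), fun ρ hρ ↦ ?_⟩
  by_contra! hexceeds
  have hbefore (r : ℝ) (hr : 0 ≤ r) (hrρ₀ : r ≤ ρ₀) : F r - c * h r ≤ max (F 0) (F ρ₀) := by
    refine (sub_le_self _ (mul_nonneg hc (hh.nonneg r hr))).trans ?_
    rcases hr.eq_or_lt with rfl | hr
    · exact le_max_left _ _
    · exact (hF hr hρ₀ hrρ₀).trans (le_max_right _ _)
  obtain ⟨s, hρ₀s, hs_before, hs_after⟩ := exists_first_exceedance
    (D := fun r ↦ F r - c * h r) hρ.le (lt_sub_iff_add_lt'.2 hexceeds) hbefore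
  have hs : 0 < s := hρ₀.trans_le hρ₀s
  obtain ⟨ε, hsmall, hε0, hε1⟩ : ∃ ε, c * K * ∫ x in Iio ε, x ∂μ < δ ∧ 0 < ε ∧ ε < 1 := by
    have hlim := hμ.tendsto_setIntegral_Iio_id.const_mul (c * K)
    rw [mul_zero] at hlim
    exact ((hlim.eventually_lt_const hδ).and (Ioo_mem_nhdsGT one_pos)).exists
  have hε : 0 < 1 - ε := sub_pos.2 hε1
  obtain ⟨r, ⟨hsr, hrs⟩, hr_exceeds⟩ := hs_after (s / (1 - ε)) <|
    (lt_div_iff₀ hε).2 (mul_lt_of_lt_one_right hs (sub_lt_self 1 hε0))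
  have hr : 0 < r := hs.trans_le hsr
  obtain ⟨hhr, hr_loss⟩ := hρ₀_loss r (hρ₀s.trans hsr)
  have hlower := const_mul_contractionLoss_sub_le hμ hh hF hc hr (hint r hr) hε1 hr_exceeds
    fun t ht htr ↦ hs_before t ht (htr.trans_lt ((lt_div_iff₀ hε).1 hrs))
  linarith [mul_lt_mul_of_pos_right hsmall hhr]

/- Right-continuity of `h` gives `T ≤ (c h - F) s` at the first exceedance point `s` itself, so the
two losses can be compared at `s`. -/
lemma exists_const_mul_le_add_of_lt_contractionLoss (hμ : IsUnitLevyMeasure μ)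
    (hh : IsContractionLipschitz h K)
    (hF : MonotoneOn F (Ioi 0)) (hF_nonneg : ∀ ρ, 0 < ρ → 0 ≤ F ρ)
    (hint : ∀ ρ, 0 < ρ → Integrable (fun x ↦ F ρ - F (ρ * (1 - x))) μ) (hc : 0 ≤ c)
    (hloss : ∀ᶠ ρ in atTop, c * contractionLoss μ h ρ < contractionLoss μ F ρ) :
    ∃ T, ∀ ρ, 0 < ρ → c * h ρ ≤ F ρ + T := by
  obtain ⟨ρ₀, hρ₀_loss, hρ₀⟩ := ((eventually_forall_ge_atTop.2 hloss).and
    (eventually_gt_atTop 0)).exists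
  refine ⟨c * h ρ₀ + |F 0|, fun ρ hρ ↦ ?_⟩
  by_contra! hexceeds
  have hbefore (r : ℝ) (hr : 0 ≤ r) (hrρ₀ : r ≤ ρ₀) : c * h r - F r ≤ c * h ρ₀ + |F 0| := by
    have hhr : c * h r ≤ c * h ρ₀ := mul_le_mul_of_nonneg_left (hh.monotoneOn hr hρ₀.le hrρ₀) hc
    rcases hr.eq_or_lt with rfl | hr
    · linarith [neg_le_abs (F 0)]
    · linarith [hF_nonneg r hr, abs_nonneg (F 0)]
  obtain ⟨s, hρ₀s, hs_before, hs_after⟩ := exists_first_exceedance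
    (D := fun r ↦ c * h r - F r) hρ.le (lt_sub_iff_add_lt'.2 hexceeds) hbefore
  have hs : 0 < s := hρ₀.trans_le hρ₀s
  have hs_ge : c * h ρ₀ + |F 0| ≤ c * h s - F s := by
    refine ge_of_tendsto (((hh.tendsto_nhdsGT hs).const_mul c).sub_const (F s)) ?_
    filter_upwards [self_mem_nhdsWithin] with t hst
    obtain ⟨r, ⟨hsr, hrt⟩, hr_exceeds⟩ := hs_after t hst
    have hr : 0 < r := hs.trans_le hsr
    have hhrt : c * h r ≤ c * h t :=
      mul_le_mul_of_nonneg_left (hh.monotoneOn hr.le (hr.trans hrt).le hrt.le) hc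
    linarith [hF hs hr hsr]
  refine (hρ₀_loss s hρ₀s).not_ge ?_
  rw [contractionLoss, contractionLoss, ← integral_const_mul]
  refine integral_mono_ae (hint s hs) ((hh.integrable_sub hμ hs.le).const_mul c)
    (hμ.ae_mem.mono fun x hx ↦ ?_)
  have hx_before := hs_before (s * (1 - x)) (mul_nonneg hs.le (sub_nonneg.2 hx.2))
    (mul_lt_of_lt_one_right hs (sub_lt_self 1 hx.1))
  dsimp only
  linarith

end Comparison

section Tauberian

variable {μ : Measure ℝ} {F h : ℝ → ℝ} {K β κ : ℝ}

lemma eventually_lt_div_of_tendsto_contractionLoss (hμ : IsUnitLevyMeasure μ) (hne : μ ≠ 0)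
    (hh : IsContractionLipschitz h K) (hβ : 0 < β) (hhβ : IsRegularlyVarying h β)
    (hF : MonotoneOn F (Ioi 0)) (hF_nonneg : ∀ ρ, 0 < ρ → 0 ≤ F ρ)
    (hint : ∀ ρ, 0 < ρ → Integrable (fun x ↦ F ρ - F (ρ * (1 - x))) μ)
    (hloss : Tendsto (fun ρ ↦ contractionLoss μ F ρ / h ρ) atTop (𝓝 κ))
    {a : ℝ} (ha : a < κ / laplaceExponent μ β) : ∀ᶠ ρ in atTop, a < F ρ / h ρ := by
  rcases lt_or_ge a 0 with ha0 | ha0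
  · filter_upwards [eventually_gt_atTop 0, hhβ.eventually_pos] with ρ hρ hpos
    exact ha0.trans_le (div_nonneg (hF_nonneg ρ hρ) hpos.le)
  obtain ⟨c, hac, hc⟩ := exists_between ha
  have hc_loss : ∀ᶠ ρ in atTop, c * contractionLoss μ h ρ < contractionLoss μ F ρ := by
    rw [lt_div_iff₀ (hμ.laplaceExponent_pos hne hβ)] at hc
    filter_upwards [((hh.tendsto_contractionLoss_div hμ hβ hhβ).const_mul c).eventually_lt hloss hc,
      hhβ.eventually_pos] with ρ hlt hpos
    rwa [← mul_div_assoc, div_lt_div_iff_of_pos_right hpos] at hlt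
  obtain ⟨T, hT⟩ := exists_const_mul_le_add_of_lt_contractionLoss hμ hh
    hF hF_nonneg hint (ha0.trans hac.le) hc_loss
  have hlim := ((hhβ.tendsto_atTop hβ hh.monotoneOn).const_div_atTop T).const_sub c
  rw [sub_zero] at hlim
  filter_upwards [hlim.eventually_const_lt hac, eventually_gt_atTop 0, hhβ.eventually_pos]
    with ρ hlt hρ hpos
  calc a < c - T / h ρ := hlt
    _ ≤ F ρ / h ρ := by
        rw [le_div_iff₀ hpos, sub_mul, div_mul_cancel₀ T hpos.ne']; linarith [hT ρ hρ]

lemma eventually_div_lt_of_tendsto_contractionLoss (hμ : IsUnitLevyMeasure μ) (hne : μ ≠ 0)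
    (hh : IsContractionLipschitz h K) (hβ : 0 < β) (hhβ : IsRegularlyVarying h β)
    (hF : MonotoneOn F (Ioi 0))
    (hint : ∀ ρ, 0 < ρ → Integrable (fun x ↦ F ρ - F (ρ * (1 - x))) μ)
    (hκ : 0 ≤ κ) (hloss : Tendsto (fun ρ ↦ contractionLoss μ F ρ / h ρ) atTop (𝓝 κ))
    {a : ℝ} (ha : κ / laplaceExponent μ β < a) : ∀ᶠ ρ in atTop, F ρ / h ρ < a := by
  have hΦ := hμ.laplaceExponent_pos hne hβ
  obtain ⟨c, hc, hca⟩ := exists_between ha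
  have hc0 : 0 ≤ c := (div_nonneg hκ hΦ.le).trans hc.le
  obtain ⟨δ, hδ0, hδ⟩ := exists_between (sub_pos.2 ((div_lt_iff₀ hΦ).1 hc))
  have hc_loss : ∀ᶠ ρ in atTop,
      contractionLoss μ F ρ ≤ c * contractionLoss μ h ρ - δ * h ρ := by
    filter_upwards [(((hh.tendsto_contractionLoss_div hμ hβ hhβ).const_mul c).sub
      hloss).eventually_const_lt hδ, hhβ.eventually_pos] with ρ hlt hpos
    rw [← mul_div_assoc, ← sub_div, lt_div_iff₀ hpos] at hlt
    linarith
  obtain ⟨T, hT⟩ := exists_le_const_mul_add_of_contractionLoss_le hμ hh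
    hF hint hhβ.eventually_pos hc0 hδ0 hc_loss
  have hlim := ((hhβ.tendsto_atTop hβ hh.monotoneOn).const_div_atTop T).const_add c
  rw [add_zero] at hlim
  filter_upwards [hlim.eventually_lt_const hca, eventually_gt_atTop 0, hhβ.eventually_pos]
    with ρ hlt hρ hpos
  calc F ρ / h ρ ≤ c + T / h ρ := by
        rw [div_le_iff₀ hpos, add_mul, div_mul_cancel₀ T hpos.ne']; exact hT ρ hρ
    _ < a := hlt

theorem tendsto_div_of_tendsto_contractionLoss (hμ : IsUnitLevyMeasure μ) (hne : μ ≠ 0)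
    (hh : IsContractionLipschitz h K) (hβ : 0 < β) (hhβ : IsRegularlyVarying h β)
    (hF : MonotoneOn F (Ioi 0)) (hF_nonneg : ∀ ρ, 0 < ρ → 0 ≤ F ρ)
    (hint : ∀ ρ, 0 < ρ → Integrable (fun x ↦ F ρ - F (ρ * (1 - x))) μ) (hκ : 0 ≤ κ)
    (hloss : Tendsto (fun ρ ↦ contractionLoss μ F ρ / h ρ) atTop (𝓝 κ)) :
    Tendsto (fun ρ ↦ F ρ / h ρ) atTop (𝓝 (κ / laplaceExponent μ β)) :=
  tendsto_order.2
    ⟨fun _ ↦ eventually_lt_div_of_tendsto_contractionLoss hμ hne hh hβ hhβ hF hF_nonneg hint hloss,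
      fun _ ↦ eventually_div_lt_of_tendsto_contractionLoss hμ hne hh hβ hhβ hF hint hκ hloss⟩

end Tauberian

section HitMean

variable {μ : Measure ℝ} {F h : ℝ → ℝ} {β C : ℝ}

lemma abs_one_sub_exp_neg_mul_mul_le {ρ x : ℝ} (hρ : 0 ≤ ρ) (hx : 0 ≤ x) (y : ℝ) :
    |(1 - exp (-(ρ * x))) * y| ≤ |y| := by
  rw [abs_mul, abs_of_nonneg (one_sub_exp_neg_mul_nonneg hρ hx)]
  exact mul_le_of_le_one_left (abs_nonneg y) (sub_le_self 1 (exp_nonneg _))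

lemma hitMean_le (hμ : IsUnitLevyMeasure μ) (hF : MonotoneOn F (Ioi 0))
    (hF_nonneg : ∀ ρ, 0 < ρ → 0 ≤ F ρ) {ρ : ℝ} (hρ : 0 < ρ)
    (hint : Integrable (fun x ↦ (1 - exp (-(ρ * x))) * F (ρ * (1 - x))) μ) :
    hitMean μ F ρ ≤ bernsteinFunction μ ρ * F ρ + |F 0| * ∫ x, x ∂μ := by
  have hG := (hμ.integrable_one_sub_exp_neg hρ.le).mul_const (F ρ)
  have hX := hμ.integrable_id.const_mul |F 0|
  rw [bernsteinFunction, ← integral_mul_const, ← integral_const_mul, ← integral_add hG hX]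
  refine integral_mono_ae hint (hG.add hX) (hμ.ae_mem.mono fun x hx ↦ ?_)
  have hp := one_sub_exp_neg_mul_nonneg hρ.le hx.1.le
  dsimp only
  rcases hx.2.lt_or_eq with hx1 | rfl
  · have hle : F (ρ * (1 - x)) ≤ F ρ :=
      hF (mul_pos hρ (sub_pos.2 hx1)) hρ (mul_one_sub_le_self hρ.le hx.1.le)
    exact (mul_le_mul_of_nonneg_left hle hp).trans
      (le_add_of_nonneg_right (mul_nonneg (abs_nonneg _) hx.1.le))
  · rw [sub_self, mul_zero, mul_one |F 0|]
    exact le_add_of_nonneg_of_le (mul_nonneg hp (hF_nonneg ρ hρ))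
      ((le_abs_self _).trans (abs_one_sub_exp_neg_mul_mul_le hρ.le hx.1.le _))

lemma le_hitMean (hμ : IsUnitLevyMeasure μ) (hF : MonotoneOn F (Ioi 0))
    (hF_nonneg : ∀ ρ, 0 < ρ → 0 ≤ F ρ) {ρ ε : ℝ} (hρ : 0 < ρ) (hε0 : 0 < ε) (hε1 : ε < 1)
    (hint : Integrable (fun x ↦ (1 - exp (-(ρ * x))) * F (ρ * (1 - x))) μ) :
    (bernsteinFunction μ ρ - (∫ x, x ∂μ) / ε) * F (ρ * (1 - ε)) - |F 0| * ∫ x, x ∂μ ≤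
      hitMean μ F ρ := by
  have hG := hμ.integrable_one_sub_exp_neg hρ.le
  have hXε := hμ.integrable_id.div_const ε
  have hGF : Integrable (fun x ↦ (1 - exp (-(ρ * x)) - x / ε) * F (ρ * (1 - ε))) μ :=
    (hG.sub hXε).mul_const _
  have hX := hμ.integrable_id.const_mul |F 0|
  rw [bernsteinFunction, ← integral_div, ← integral_const_mul, ← integral_sub hG hXε,
    ← integral_mul_const, ← integral_sub hGF hX]
  refine integral_mono_ae (hGF.sub hX) hint (hμ.ae_mem.mono fun x hx ↦ ?_)
  have hp := one_sub_exp_neg_mul_nonneg hρ.le hx.1.le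
  have hε : 0 < ρ * (1 - ε) := mul_pos hρ (sub_pos.2 hε1)
  have hFε := hF_nonneg _ hε
  have hX_nonneg : 0 ≤ |F 0| * x := mul_nonneg (abs_nonneg _) hx.1.le
  dsimp only
  rcases lt_or_ge x ε with hxε | hεx
  · have hle : F (ρ * (1 - ε)) ≤ F (ρ * (1 - x)) :=
      hF hε (mul_pos hρ (sub_pos.2 (hxε.trans hε1))) (by gcongr)
    have hdiv : 0 ≤ x / ε * F (ρ * (1 - ε)) := mul_nonneg (div_nonneg hx.1.le hε0.le) hFε
    linarith [mul_le_mul_of_nonneg_left hle hp]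
  · have hone : 1 - exp (-(ρ * x)) - x / ε ≤ 0 := by
      linarith [(one_le_div hε0).2 hεx, exp_pos (-(ρ * x))]
    refine (sub_le_sub_right (mul_nonpos_of_nonpos_of_nonneg hone hFε) _).trans ?_
    rcases hx.2.lt_or_eq with hx1 | rfl
    · linarith [mul_nonneg hp (hF_nonneg _ (mul_pos hρ (sub_pos.2 hx1)))]
    · rw [sub_self, mul_zero, mul_one |F 0|, zero_sub]
      exact neg_le_of_abs_le (abs_one_sub_exp_neg_mul_mul_le hρ.le hx.1.le _)

lemma eventually_lt_hitMean_div (hμ : IsUnitLevyMeasure μ) (hhβ : IsRegularlyVarying h β)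
    (hG : Tendsto (bernsteinFunction μ) atTop atTop)
    (hGh : Tendsto (fun ρ ↦ bernsteinFunction μ ρ * h ρ) atTop atTop)
    (hF : MonotoneOn F (Ioi 0)) (hF_nonneg : ∀ ρ, 0 < ρ → 0 ≤ F ρ)
    (hint : ∀ ρ, 0 < ρ → Integrable (fun x ↦ (1 - exp (-(ρ * x))) * F (ρ * (1 - x))) μ)
    (hlim : Tendsto (fun ρ ↦ F ρ / h ρ) atTop (𝓝 C)) {a : ℝ} (ha : a < C) :
    ∀ᶠ ρ in atTop, a < hitMean μ F ρ / (bernsteinFunction μ ρ * h ρ) := by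
  have hε_lim : Tendsto (fun ε : ℝ ↦ C * (1 - ε) ^ β) (𝓝[>] 0) (𝓝 C) := by
    have hcont : ContinuousAt (fun ε : ℝ ↦ C * (1 - ε) ^ β) 0 := by
      fun_prop (disch := norm_num)
    simpa using hcont.tendsto.mono_left nhdsWithin_le_nhds
  obtain ⟨ε, haε, hε0, hε1⟩ := ((hε_lim.eventually_const_lt ha).and
    (Ioo_mem_nhdsGT one_pos)).exists
  have hlower := ((((hG.const_div_atTop ((∫ x, x ∂μ) / ε)).const_sub 1).mul
    (hhβ.tendsto_comp_mul_div hlim (sub_pos.2 hε1))).sub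
      (hGh.const_div_atTop (|F 0| * ∫ x, x ∂μ)))
  rw [sub_zero, sub_zero, one_mul] at hlower
  filter_upwards [hlower.eventually_const_lt haε, eventually_gt_atTop 0,
    hG.eventually_gt_atTop 0, hhβ.eventually_pos] with ρ hlt hρ hGρ hhρ
  refine hlt.trans_le ?_
  rw [one_sub_div hGρ.ne', div_mul_div_comm, ← sub_div, mul_comm (1 - ε)]
  exact div_le_div_of_nonneg_right (le_hitMean hμ hF hF_nonneg hρ hε0 hε1 (hint ρ hρ))
    (mul_pos hGρ hhρ).le

lemma eventually_hitMean_div_lt (hμ : IsUnitLevyMeasure μ) (hh : ∀ᶠ ρ in atTop, 0 < h ρ)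
    (hG : ∀ᶠ ρ in atTop, 0 < bernsteinFunction μ ρ)
    (hGh : Tendsto (fun ρ ↦ bernsteinFunction μ ρ * h ρ) atTop atTop)
    (hF : MonotoneOn F (Ioi 0)) (hF_nonneg : ∀ ρ, 0 < ρ → 0 ≤ F ρ)
    (hint : ∀ ρ, 0 < ρ → Integrable (fun x ↦ (1 - exp (-(ρ * x))) * F (ρ * (1 - x))) μ)
    (hlim : Tendsto (fun ρ ↦ F ρ / h ρ) atTop (𝓝 C)) {a : ℝ} (ha : C < a) :
    ∀ᶠ ρ in atTop, hitMean μ F ρ / (bernsteinFunction μ ρ * h ρ) < a := by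
  have hupper := hlim.add (hGh.const_div_atTop (|F 0| * ∫ x, x ∂μ))
  rw [add_zero] at hupper
  filter_upwards [hupper.eventually_lt_const ha, eventually_gt_atTop 0, hG, hh]
    with ρ hlt hρ hGρ hhρ
  refine lt_of_le_of_lt ?_ hlt
  rw [← mul_div_mul_left (F ρ) (h ρ) hGρ.ne', ← add_div]
  exact div_le_div_of_nonneg_right (hitMean_le hμ hF hF_nonneg hρ (hint ρ hρ)) (mul_pos hGρ hhρ).le

lemma tendsto_hitMean_div (hμ : IsUnitLevyMeasure μ) (hhβ : IsRegularlyVarying h β)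
    (hG : Tendsto (bernsteinFunction μ) atTop atTop)
    (hGh : Tendsto (fun ρ ↦ bernsteinFunction μ ρ * h ρ) atTop atTop)
    (hF : MonotoneOn F (Ioi 0)) (hF_nonneg : ∀ ρ, 0 < ρ → 0 ≤ F ρ)
    (hint : ∀ ρ, 0 < ρ → Integrable (fun x ↦ (1 - exp (-(ρ * x))) * F (ρ * (1 - x))) μ)
    (hlim : Tendsto (fun ρ ↦ F ρ / h ρ) atTop (𝓝 C)) :
    Tendsto (fun ρ ↦ hitMean μ F ρ / (bernsteinFunction μ ρ * h ρ)) atTop (𝓝 C) :=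
  tendsto_order.2
    ⟨fun _ ↦ eventually_lt_hitMean_div hμ hhβ hG hGh hF hF_nonneg hint hlim,
      fun _ ↦ eventually_hitMean_div_lt hμ hhβ.eventually_pos (hG.eventually_gt_atTop 0) hGh hF
        hF_nonneg hint hlim⟩

end HitMean

section Recursion

variable {μ : Measure ℝ} {α : ℝ}

lemma ne_zero_of_isRegularlyVarying_bernsteinFunction
    (hG : IsRegularlyVarying (bernsteinFunction μ) α) : μ ≠ 0 := by
  rintro rfl
  obtain ⟨ρ, hρ⟩ := hG.eventually_pos.exists
  simp [bernsteinFunction] at hρ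

lemma tendsto_div_pow_succ_of_contractionLoss_eq (hμ : IsUnitLevyMeasure μ) (hα : 0 < α)
    (hG : IsRegularlyVarying (bernsteinFunction μ) α) {E F : ℝ → ℝ} {k C : ℝ} {m : ℕ} (hk : 0 ≤ k)
    (hE : MonotoneOn E (Ioi 0)) (hE_nonneg : ∀ ρ, 0 < ρ → 0 ≤ E ρ)
    (hF : MonotoneOn F (Ioi 0)) (hF_nonneg : ∀ ρ, 0 < ρ → 0 ≤ F ρ)
    (hF_int : ∀ ρ, 0 < ρ → Integrable (fun x ↦ F ρ - F (ρ * (1 - x))) μ)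
    (hE_int : ∀ ρ, 0 < ρ → Integrable (fun x ↦ (1 - exp (-(ρ * x))) * E (ρ * (1 - x))) μ)
    (hrec : ∀ ρ, 0 < ρ → contractionLoss μ F ρ = k * hitMean μ E ρ)
    (hlim : Tendsto (fun ρ ↦ E ρ / bernsteinFunction μ ρ ^ m) atTop (𝓝 C)) :
    Tendsto (fun ρ ↦ F ρ / bernsteinFunction μ ρ ^ (m + 1)) atTop
      (𝓝 (C * (k / laplaceExponent μ (α * (m + 1 : ℕ))))) := by
  have hG_top := hG.tendsto_atTop hα hμ.bernsteinFunction_monotoneOn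
  have hC : 0 ≤ C := ge_of_tendsto hlim <| by
    filter_upwards [eventually_gt_atTop 0] with ρ hρ
    exact div_nonneg (hE_nonneg ρ hρ) (pow_nonneg (hμ.bernsteinFunction_nonneg hρ.le) m)
  have hsource : Tendsto (fun ρ ↦ hitMean μ E ρ / bernsteinFunction μ ρ ^ (m + 1)) atTop (𝓝 C) := by
    simp only [pow_succ']
    refine tendsto_hitMean_div hμ (hG.pow m) hG_top ?_ hE hE_nonneg hE_int hlim
    simpa only [← pow_succ'] using! (tendsto_pow_atTop m.succ_ne_zero).comp hG_top
  have hloss : Tendsto (fun ρ ↦ contractionLoss μ F ρ / bernsteinFunction μ ρ ^ (m + 1)) atTop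
      (𝓝 (C * k)) := by
    refine (hsource.mul_const k).congr' ?_
    filter_upwards [eventually_gt_atTop 0] with ρ hρ
    rw [hrec ρ hρ, div_mul_eq_mul_div, mul_comm k]
  rw [← mul_div_assoc]
  exact tendsto_div_of_tendsto_contractionLoss hμ
    (ne_zero_of_isRegularlyVarying_bernsteinFunction hG)
    (hμ.isContractionLipschitz_bernsteinFunction.pow (m + 1))
    (mul_pos hα (Nat.cast_pos.2 m.succ_pos)) (hG.pow (m + 1)) hF hF_nonneg hF_int
    (mul_nonneg hC hk) hloss

theorem tendsto_div_bernsteinFunction_pow (hμ : IsUnitLevyMeasure μ) (hα : 0 < α)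
    (hG : IsRegularlyVarying (bernsteinFunction μ) α) {f : ℕ → ℝ → ℝ} {M : ℕ}
    (hf0 : ∀ ρ, 0 < ρ → f 0 ρ = 1) (hnonneg : ∀ m ≤ M, ∀ ρ, 0 < ρ → 0 ≤ f m ρ)
    (hmono : ∀ m ≤ M, MonotoneOn (f m) (Ioi 0))
    (hf_int : ∀ m < M, ∀ ρ, 0 < ρ →
      Integrable (fun x ↦ f (m + 1) ρ - f (m + 1) (ρ * (1 - x))) μ)
    (hhit_int : ∀ m < M, ∀ ρ, 0 < ρ →
      Integrable (fun x ↦ (1 - exp (-(ρ * x))) * f m (ρ * (1 - x))) μ)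
    (hrec : ∀ m < M, ∀ ρ, 0 < ρ →
      contractionLoss μ (f (m + 1)) ρ = (m + 1 : ℕ) * hitMean μ (f m) ρ) :
    Tendsto (fun ρ ↦ f M ρ / bernsteinFunction μ ρ ^ M) atTop
      (𝓝 (∏ j ∈ Finset.Icc 1 M, (j / laplaceExponent μ (α * j)))) := by
  suffices ∀ m ≤ M, Tendsto (fun ρ ↦ f m ρ / bernsteinFunction μ ρ ^ m) atTop
      (𝓝 (∏ j ∈ Finset.Icc 1 m, (j / laplaceExponent μ (α * j)))) from this M le_rfl
  intro m
  induction m with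
  | zero =>
    intro _
    refine tendsto_const_nhds.congr' ?_
    filter_upwards [eventually_gt_atTop 0] with ρ hρ
    simp [hf0 ρ hρ]
  | succ m ih =>
    intro hm
    rw [Finset.prod_Icc_succ_top m.succ_pos]
    exact tendsto_div_pow_succ_of_contractionLoss_eq hμ hα hG (Nat.cast_nonneg _)
      (hmono m (by lia)) (hnonneg m (by lia)) (hmono _ hm) (hnonneg _ hm) (hf_int m hm)
      (hhit_int m hm) (hrec m hm) (ih (by lia))

end Recursion

lemma isUnitLevyMeasure_of_isRegularlyVarying_tailFunction {μ : Measure ℝ} {α : ℝ}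
    (hmem : ∀ᵐ x ∂μ, x ∈ Ioc (0 : ℝ) 1) (hfin : ∀ x, 0 < x → μ (Ici x) ≠ ⊤) (hα0 : 0 ≤ α)
    (hα1 : α < 1) (htail : IsRegularlyVarying (tailFunction μ) α) : IsUnitLevyMeasure μ := by
  obtain ⟨ρ, hρ, hint⟩ := ((eventually_gt_atTop 0).and (eventually_integrable_one_sub_exp_neg
    (hmem.mono fun x hx ↦ hx.1.le) hfin hα0 hα1 htail)).exists
  exact .of_integrable hmem hρ hint

section RestrictUnit

variable {ν : Measure ℝ} {ℓ : ℝ → ℝ} {α : ℝ}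

lemma restrict_Ioc_apply_Ici {x : ℝ} (hx : 0 < x) : ν.restrict (Ioc 0 1) (Ici x) = ν (Icc x 1) := by
  rw [Measure.restrict_apply measurableSet_Ici, ← Ici_inter_Iic, ← Ioi_inter_Iic, ← inter_assoc,
    inter_eq_left.2 (Ici_subset_Ioi.2 hx)]

lemma tendsto_tailFunction_div
    (hlim : Tendsto (fun x ↦ (ν (Icc x 1)).toReal * x ^ α / ℓ (1 / x)) (𝓝[>] 0) (𝓝 1)) :
    Tendsto (fun t ↦ tailFunction (ν.restrict (Ioc 0 1)) t / (t ^ α * ℓ t)) atTop (𝓝 1) := by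
  refine (hlim.comp tendsto_inv_atTop_nhdsGT_zero).congr' ?_
  filter_upwards [eventually_gt_atTop 0] with t ht
  rw [Function.comp_apply, one_div, inv_inv, Real.inv_rpow ht.le, tailFunction, Measure.real,
    restrict_Ioc_apply_Ici (inv_pos.2 ht), ← div_eq_mul_inv, div_div]

end RestrictUnit

/-- Asymptotics of the factorial moments of the poissonized composition: if `ℓ` is
slowly varying at `∞`, `0 < α < 1`, `ν̃` is a nonzero measure on `(0,1]` with finite
tails and `ν̃([x,1]) x^α / ℓ(1/x) → 1` as `x ↓ 0`, `Φ(s) = ∫₀¹ (1-(1-x)^s) ν̃(dx)`,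
and `f_0 ≡ 1, f_1, …, f_M` are nondecreasing nonnegative functions tending to `∞`
satisfying the integral recursion
`∫₀¹ (f_m(ρ) - f_m(ρ(1-x))) ν̃(dx) = m ∫₀¹ (1-e^{-ρx}) f_{m-1}(ρ(1-x)) ν̃(dx)`,
then `f_M(ρ)/(ρ^α ℓ(ρ))^M → ∏_{j=1}^M (j Γ(1-α)/Φ(αj))`. -/
theorem factorial_moment_asymptotics (ℓ : ℝ → ℝ)
    (hℓpos : ∀ t : ℝ, 0 < t → 0 < ℓ t)
    (hℓsv : ∀ c : ℝ, 0 < c → Tendsto (fun t : ℝ => ℓ (c * t) / ℓ t) atTop (nhds 1))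
    (α : ℝ) (hα0 : 0 < α) (hα1 : α < 1)
    (ν : Measure ℝ) (hν : ν ≠ 0) (hsupp : ν (Set.Ioc (0 : ℝ) 1)ᶜ = 0)
    (hfin : ∀ x : ℝ, 0 < x → ν (Set.Icc x 1) ≠ ⊤)
    (hlim : Tendsto (fun x : ℝ => (ν (Set.Icc x 1)).toReal * x ^ α / ℓ (1 / x))
      (nhdsWithin 0 (Set.Ioi 0)) (nhds 1))
    (M : ℕ) (hM : 1 ≤ M) (f : ℕ → ℝ → ℝ)
    (hf0 : ∀ ρ : ℝ, 0 < ρ → f 0 ρ = 1)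
    (hnonneg : ∀ m : ℕ, m ≤ M → ∀ ρ : ℝ, 0 < ρ → 0 ≤ f m ρ)
    (hmono : ∀ m : ℕ, m ≤ M → MonotoneOn (f m) (Set.Ioi (0 : ℝ)))
    (hinfty : ∀ m : ℕ, 1 ≤ m → m ≤ M → Tendsto (f m) atTop atTop)
    (hrec : ∀ m : ℕ, 1 ≤ m → m ≤ M → ∀ ρ : ℝ, 0 < ρ →
      IntegrableOn (fun x : ℝ => f m ρ - f m (ρ * (1 - x))) (Set.Ioc (0 : ℝ) 1) ν ∧
      IntegrableOn (fun x : ℝ => (1 - Real.exp (-(ρ * x))) * f (m - 1) (ρ * (1 - x)))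
        (Set.Ioc (0 : ℝ) 1) ν ∧
      ∫ x in Set.Ioc (0 : ℝ) 1, (f m ρ - f m (ρ * (1 - x))) ∂ν =
        m * ∫ x in Set.Ioc (0 : ℝ) 1,
          (1 - Real.exp (-(ρ * x))) * f (m - 1) (ρ * (1 - x)) ∂ν) :
    Tendsto (fun ρ : ℝ => f M ρ / (ρ ^ α * ℓ ρ) ^ M) atTop
      (nhds (∏ j ∈ Finset.Icc 1 M,
        ((j : ℝ) * Real.Gamma (1 - α) /
          ∫ x in Set.Ioc (0 : ℝ) 1, (1 - (1 - x) ^ (α * (j : ℝ))) ∂ν))) := by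
  set μ := ν.restrict (Ioc 0 1)
  have hmem : ∀ᵐ x ∂μ, x ∈ Ioc (0 : ℝ) 1 := ae_restrict_mem measurableSet_Ioc
  have hfin_Ici (x : ℝ) (hx : 0 < x) : μ (Ici x) ≠ ⊤ :=
    (restrict_Ioc_apply_Ici hx).trans_ne (hfin x hx)
  have hℓ : IsRegularlyVarying ℓ 0 :=
    ⟨(eventually_gt_atTop 0).mono hℓpos, by simpa only [Real.rpow_zero] using hℓsv⟩
  have hscale := hℓ.rpow_mul α
  have htail_div := tendsto_tailFunction_div hlim
  have htail := hscale.of_tendsto_div one_pos htail_div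
  have hμ := isUnitLevyMeasure_of_isRegularlyVarying_tailFunction hmem hfin_Ici hα0.le hα1 htail
  have hG_div := tendsto_bernsteinFunction_div (hmem.mono fun x hx ↦ hx.1.le) hfin_Ici hα0.le hα1
    hscale one_pos htail_div
  rw [mul_one] at hG_div
  have hG := hscale.of_tendsto_div (Gamma_pos_of_pos (sub_pos.2 hα1)) hG_div
  have hf_div := tendsto_div_bernsteinFunction_pow hμ hα0 hG hf0 hnonneg hmono
    (fun m hm ρ hρ ↦ (hrec (m + 1) m.succ_pos hm ρ hρ).1)
    (fun m hm ρ hρ ↦ (hrec (m + 1) m.succ_pos hm ρ hρ).2.1)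
    (fun m hm ρ hρ ↦ (hrec (m + 1) m.succ_pos hm ρ hρ).2.2)
  change Tendsto _ _ (𝓝 (∏ j ∈ Finset.Icc 1 M, (j * Gamma (1 - α) / laplaceExponent μ (α * j))))
  simp_rw [mul_div_right_comm, Finset.prod_mul_distrib, Finset.prod_const, Nat.card_Icc,
    Nat.add_sub_cancel]
  refine (hf_div.mul (hG_div.pow M)).congr' ?_
  filter_upwards [hG.eventually_pos] with ρ hGρ
  rw [div_pow, div_mul_div_cancel₀ (pow_pos hGρ M).ne']
end

section
/- Fix u > 1 and define ℓ : (0,∞) → (0,∞) by ℓ(s) = (log s)^{−u} for s ≥ e and ℓ(s) = 1 for 0 < s < e. Then ℓ is slowly varying at ∞, the integral ℓ*(t) = ∫₀^∞ e^{−1/y} y^{−1} ℓ(ty) dy converges for every t > 0, and ℓ*(t) · (u−1) · (log t)^{u−1} → 1 as t → ∞; that is, ℓ*(t) ∼ (u−1)^{−1} (log t)^{1−u}. -/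
open Filter MeasureTheory Real

/-!
Write `ℓ(s) = (max 1 (log s)) ^ (-u)` and compare `e^{-1/y}` with the indicator of `y > 1`.
The integral `∫_1^∞ y⁻¹ ℓ(ty) dy = ∫_t^∞ s⁻¹ ℓ(s) ds` equals `(log t)^{1-u} / (u - 1)` for `t ≥ e`.
The remainder is `O(ℓ(t))`, hence smaller by a factor `log t`: on `y > 1` because `ℓ` decreases and
`1 - e^{-1/y} ≤ 1/y`; on `y ≤ 1` because of the Potter-type bound `ℓ(ty) ≤ y^{-u} ℓ(t)` and
`∫_0^∞ e^{-1/y} y^{-u-1} dy = Γ(u)`.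
-/

open Set Topology

section SlowVariation

variable {f g : ℝ → ℝ}

/-- Slow variation at `∞` in the sense of Karamata: `f` is asymptotically unchanged when its
argument is rescaled. Positivity and measurability of `f` are not part of the definition. -/
def IsSlowlyVarying (f : ℝ → ℝ) : Prop :=
  ∀ c : ℝ, 0 < c → Tendsto (fun t => f (c * t) / f t) atTop (𝓝 1)

theorem IsSlowlyVarying.congr' (hf : IsSlowlyVarying f) (hfg : f =ᶠ[atTop] g) :
    IsSlowlyVarying g := by
  intro c hc
  have hmul : Tendsto (fun t => c * t) atTop atTop := tendsto_id.const_mul_atTop hc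
  exact (hf c hc).congr' ((hfg.comp_tendsto hmul).div hfg)

theorem IsSlowlyVarying.rpow_const (hf : IsSlowlyVarying f) (hf₀ : ∀ᶠ t in atTop, 0 ≤ f t) (r : ℝ) :
    IsSlowlyVarying fun t => f t ^ r := by
  intro c hc
  have hlim : Tendsto (fun t => (f (c * t) / f t) ^ r) atTop (𝓝 1) := by
    simpa using (hf c hc).rpow_const (p := r) (Or.inl one_ne_zero)
  refine hlim.congr' ?_
  filter_upwards [hf₀, (tendsto_id.const_mul_atTop hc).eventually hf₀] with t ht hct
  exact div_rpow hct ht r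

theorem isSlowlyVarying_log : IsSlowlyVarying log := by
  intro c hc
  have hlim : Tendsto (fun t => log c * (log t)⁻¹ + 1) atTop (𝓝 1) := by
    simpa using ((tendsto_inv_atTop_zero.comp tendsto_log_atTop).const_mul (log c)).add_const 1
  refine hlim.congr' ?_
  filter_upwards [eventually_gt_atTop 1] with t ht
  have hlog : log t ≠ 0 := (log_pos ht).ne'
  rw [log_mul hc.ne' (by positivity), add_div, div_self hlog, div_eq_mul_inv]

end SlowVariation

section MultiplicativeHaar

variable {E : Type*} [NormedAddCommGroup E] [NormedSpace ℝ E] {t : ℝ}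

theorem inv_smul_comp_mul_left (f : ℝ → E) (ht : 0 < t) :
    (fun y => y⁻¹ • f (t * y)) = fun y => t • ((t * y)⁻¹ • f (t * y)) := by
  ext y
  rw [smul_smul, mul_inv, mul_inv_cancel_left₀ ht.ne']

theorem integrableOn_Ioi_inv_smul_comp_mul_left_iff (f : ℝ → E) (a : ℝ) (ht : 0 < t) :
    IntegrableOn (fun y => y⁻¹ • f (t * y)) (Ioi a) ↔
      IntegrableOn (fun s => s⁻¹ • f s) (Ioi (t * a)) := by
  rw [inv_smul_comp_mul_left f ht, ← integrableOn_Ioi_comp_mul_left_iff _ _ ht]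
  exact integrable_smul_iff ht.ne' _

theorem integral_Ioi_inv_smul_comp_mul_left (f : ℝ → E) (a : ℝ) (ht : 0 < t) :
    ∫ y in Ioi a, y⁻¹ • f (t * y) = ∫ s in Ioi (t * a), s⁻¹ • f s := by
  rw [inv_smul_comp_mul_left f ht, integral_smul, ← integral_comp_mul_left_Ioi' _ _ ht]

end MultiplicativeHaar

section Kernel

variable {p y A B : ℝ} {g : ℝ → ℝ}

-- The substitution `x = y⁻¹` in Euler's integral for `Γ(p)`, as in `integral_comp_rpow_Ioi`.
theorem exp_neg_one_div_mul_rpow_eqOn (p : ℝ) :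
    EqOn (fun y => (|(-1 : ℝ)| * y ^ ((-1 : ℝ) - 1)) •
        (exp (-y ^ (-1 : ℝ)) * (y ^ (-1 : ℝ)) ^ (p - 1)))
      (fun y => exp (-1 / y) * y ^ (-p - 1)) (Ioi 0) := by
  intro y (hy : 0 < y)
  have hexp : -y ^ (-1 : ℝ) = -1 / y := by rw [rpow_neg_one, neg_div, one_div]
  have hpow : y ^ ((-1 : ℝ) - 1) * y ^ (-1 * (p - 1)) = y ^ (-p - 1) := by
    rw [← rpow_add hy]; ring_nf
  simp only [smul_eq_mul, abs_neg, abs_one, one_mul]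
  rw [← rpow_mul hy.le, hexp, ← hpow]
  ring

theorem integrableOn_exp_neg_one_div_mul_rpow (hp : 0 < p) :
    IntegrableOn (fun y => exp (-1 / y) * y ^ (-p - 1)) (Ioi 0) :=
  ((integrableOn_Ioi_comp_rpow_iff _ (by norm_num)).2 (GammaIntegral_convergent hp)).congr_fun
    (exp_neg_one_div_mul_rpow_eqOn p) measurableSet_Ioi

theorem integral_exp_neg_one_div_mul_rpow (hp : 0 < p) :
    ∫ y in Ioi 0, exp (-1 / y) * y ^ (-p - 1) = Gamma p := by
  rw [Gamma_eq_integral hp,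
    ← integral_comp_rpow_Ioi (fun x => exp (-x) * x ^ (p - 1)) (by norm_num : (-1 : ℝ) ≠ 0)]
  exact (setIntegral_congr_fun measurableSet_Ioi (exp_neg_one_div_mul_rpow_eqOn p)).symm

theorem norm_exp_neg_one_div_mul_inv_mul_le (hy : 0 < y) {z : ℝ} (hz : |z| ≤ A * y ^ (-p)) :
    ‖exp (-1 / y) * y⁻¹ * z‖ ≤ A * (exp (-1 / y) * y ^ (-p - 1)) := by
  have hpos : 0 < exp (-1 / y) * y⁻¹ := by positivity
  calc ‖exp (-1 / y) * y⁻¹ * z‖ = exp (-1 / y) * y⁻¹ * |z| := by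
        rw [norm_mul, norm_of_nonneg hpos.le, norm_eq_abs]
    _ ≤ exp (-1 / y) * y⁻¹ * (A * y ^ (-p)) := by gcongr
    _ = A * (exp (-1 / y) * y ^ (-p - 1)) := by rw [rpow_sub_one hy.ne']; ring

theorem integrableOn_Ioc_exp_neg_one_div_mul_inv_mul (hp : 0 < p)
    (hg : AEStronglyMeasurable g (volume.restrict (Ioc 0 1)))
    (hA : ∀ y ∈ Ioc 0 1, |g y| ≤ A * y ^ (-p)) :
    IntegrableOn (fun y => exp (-1 / y) * y⁻¹ * g y) (Ioc 0 1) := by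
  have hkernel : Measurable fun y : ℝ => exp (-1 / y) * y⁻¹ := by fun_prop
  refine (((integrableOn_exp_neg_one_div_mul_rpow hp).mono_set Ioc_subset_Ioi_self).const_mul
    A).mono' (hkernel.aestronglyMeasurable.mul hg) ?_
  exact ae_restrict_of_forall_mem measurableSet_Ioc fun y hy =>
    norm_exp_neg_one_div_mul_inv_mul_le hy.1 (hA y hy)

theorem abs_integral_Ioc_exp_neg_one_div_mul_inv_mul_le (hp : 0 < p)
    (hA : ∀ y ∈ Ioc 0 1, |g y| ≤ A * y ^ (-p)) :
    |∫ y in Ioc 0 1, exp (-1 / y) * y⁻¹ * g y| ≤ A * Gamma p := by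
  have hint := integrableOn_exp_neg_one_div_mul_rpow hp
  have hA₀ : 0 ≤ A := by simpa using (abs_nonneg _).trans (hA 1 (by simp))
  calc |∫ y in Ioc 0 1, exp (-1 / y) * y⁻¹ * g y|
      ≤ ∫ y in Ioc 0 1, A * (exp (-1 / y) * y ^ (-p - 1)) :=
        norm_integral_le_of_norm_le ((hint.mono_set Ioc_subset_Ioi_self).const_mul A) <|
          ae_restrict_of_forall_mem measurableSet_Ioc fun y hy =>
            norm_exp_neg_one_div_mul_inv_mul_le hy.1 (hA y hy)
    _ = A * ∫ y in Ioc 0 1, exp (-1 / y) * y ^ (-p - 1) := integral_const_mul _ _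
    _ ≤ A * ∫ y in Ioi 0, exp (-1 / y) * y ^ (-p - 1) := by
        refine mul_le_mul_of_nonneg_left (setIntegral_mono_set hint ?_ ?_) hA₀
        · exact ae_restrict_of_forall_mem measurableSet_Ioi fun y (hy : 0 < y) =>
            (by positivity : 0 ≤ exp (-1 / y) * y ^ (-p - 1))
        · exact Ioc_subset_Ioi_self.eventuallyLE
    _ = A * Gamma p := by rw [integral_exp_neg_one_div_mul_rpow hp]

theorem exp_neg_one_div_le_one (hy : 0 ≤ y) : exp (-1 / y) ≤ 1 :=
  exp_le_one_iff.2 (div_nonpos_of_nonpos_of_nonneg (by norm_num) hy)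

theorem abs_exp_neg_one_div_sub_one_le (hy : 0 ≤ y) : |exp (-1 / y) - 1| ≤ y⁻¹ := by
  rw [abs_sub_comm, abs_of_nonneg (sub_nonneg.2 (exp_neg_one_div_le_one hy)), neg_div, one_div]
  linarith [one_sub_le_exp_neg y⁻¹]

theorem norm_exp_neg_one_div_mul_inv_mul_sub_le (hy : 0 < y) {z : ℝ} (hz : |z| ≤ B) :
    ‖exp (-1 / y) * y⁻¹ * z - y⁻¹ * z‖ ≤ B * y ^ (-2 : ℝ) := by
  calc ‖exp (-1 / y) * y⁻¹ * z - y⁻¹ * z‖ = |exp (-1 / y) - 1| * y⁻¹ * |z| := by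
        rw [mul_assoc, ← sub_one_mul, ← mul_assoc, norm_mul, norm_mul,
          norm_of_nonneg (inv_pos.2 hy).le, norm_eq_abs, norm_eq_abs]
    _ ≤ y⁻¹ * y⁻¹ * B := by
        gcongr
        exact abs_exp_neg_one_div_sub_one_le hy.le
    _ = B * y ^ (-2 : ℝ) := by rw [rpow_neg hy.le, rpow_two, sq, mul_inv, mul_comm]

theorem integrableOn_Ioi_exp_neg_one_div_mul_inv_mul {a : ℝ} (ha : 0 ≤ a)
    (hg : IntegrableOn (fun y => y⁻¹ * g y) (Ioi a)) :
    IntegrableOn (fun y => exp (-1 / y) * y⁻¹ * g y) (Ioi a) := by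
  simp only [mul_assoc]
  refine Integrable.bdd_mul (c := 1) hg (by fun_prop) ?_
  refine ae_restrict_of_forall_mem measurableSet_Ioi fun y (hy : a < y) => ?_
  rw [norm_of_nonneg (exp_pos _).le]
  exact exp_neg_one_div_le_one (ha.trans hy.le)

theorem abs_integral_Ioi_exp_neg_one_div_mul_inv_mul_sub_le
    (hg : IntegrableOn (fun y => y⁻¹ * g y) (Ioi 1)) (hB : ∀ y ∈ Ioi 1, |g y| ≤ B) :
    |(∫ y in Ioi 1, exp (-1 / y) * y⁻¹ * g y) - ∫ y in Ioi 1, y⁻¹ * g y| ≤ B := by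
  have hsq : IntegrableOn (fun y : ℝ => y ^ (-2 : ℝ)) (Ioi 1) :=
    integrableOn_Ioi_rpow_of_lt (by norm_num) one_pos
  rw [← integral_sub (integrableOn_Ioi_exp_neg_one_div_mul_inv_mul zero_le_one hg) hg]
  calc |∫ y in Ioi 1, (exp (-1 / y) * y⁻¹ * g y - y⁻¹ * g y)|
      ≤ ∫ y in Ioi 1, B * y ^ (-2 : ℝ) :=
        norm_integral_le_of_norm_le (hsq.const_mul B) <|
          ae_restrict_of_forall_mem measurableSet_Ioi fun y hy =>
            norm_exp_neg_one_div_mul_inv_mul_sub_le (one_pos.trans hy) (hB y hy)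
    _ = B := by
        rw [integral_const_mul, integral_Ioi_rpow_of_lt (by norm_num) one_pos]
        norm_num

end Kernel

section StarTransform

variable {ℓ ℓ' : ℝ → ℝ} {t p A B : ℝ}

/-- The integrand `y ↦ e^{-1/y} y⁻¹ ℓ(ty)` of `ℓ*(t)`, meant for `0 < y`. -/
noncomputable def lstarIntegrand (ℓ : ℝ → ℝ) (t y : ℝ) : ℝ :=
  exp (-1 / y) * y⁻¹ * ℓ (t * y)

/-- The function `ℓ*(t) = ∫₀^∞ e^{-1/y} y⁻¹ ℓ(ty) dy` associated with `ℓ`. It has the junk value `0`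
where the integral diverges. -/
noncomputable def lstar (ℓ : ℝ → ℝ) (t : ℝ) : ℝ :=
  ∫ y in Ioi 0, lstarIntegrand ℓ t y

theorem lstarIntegrand_eqOn (h : EqOn ℓ ℓ' (Ioi 0)) (ht : 0 < t) :
    EqOn (lstarIntegrand ℓ t) (lstarIntegrand ℓ' t) (Ioi 0) := fun y hy => by
  simp only [lstarIntegrand, h (mul_pos ht hy : t * y ∈ Ioi 0)]

theorem lstar_congr (h : EqOn ℓ ℓ' (Ioi 0)) (ht : 0 < t) : lstar ℓ t = lstar ℓ' t :=
  setIntegral_congr_fun measurableSet_Ioi (lstarIntegrand_eqOn h ht)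

theorem integrableOn_lstarIntegrand (ht : 0 < t) (hp : 0 < p) (hmeas : Measurable ℓ)
    (hint : IntegrableOn (fun s => s⁻¹ * ℓ s) (Ioi t))
    (hA : ∀ y ∈ Ioc 0 1, |ℓ (t * y)| ≤ A * y ^ (-p)) :
    IntegrableOn (lstarIntegrand ℓ t) (Ioi 0) := by
  rw [← Ioc_union_Ioi_eq_Ioi zero_le_one]
  refine .union (integrableOn_Ioc_exp_neg_one_div_mul_inv_mul hp ?_ hA)
    (integrableOn_Ioi_exp_neg_one_div_mul_inv_mul zero_le_one ?_)
  · exact (hmeas.comp (measurable_const_mul t)).aestronglyMeasurable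
  · exact (integrableOn_Ioi_inv_smul_comp_mul_left_iff ℓ 1 ht).2 (by simpa using hint)

theorem abs_lstar_sub_integral_Ioi_le (ht : 0 < t) (hp : 0 < p) (hmeas : Measurable ℓ)
    (hint : IntegrableOn (fun s => s⁻¹ * ℓ s) (Ioi t))
    (hA : ∀ y ∈ Ioc 0 1, |ℓ (t * y)| ≤ A * y ^ (-p)) (hB : ∀ y ∈ Ioi 1, |ℓ (t * y)| ≤ B) :
    |lstar ℓ t - ∫ s in Ioi t, s⁻¹ * ℓ s| ≤ A * Gamma p + B := by
  have hint₁ : IntegrableOn (fun y => y⁻¹ * ℓ (t * y)) (Ioi 1) :=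
    (integrableOn_Ioi_inv_smul_comp_mul_left_iff ℓ 1 ht).2 (by simpa using hint)
  have hscale : ∫ s in Ioi t, s⁻¹ * ℓ s = ∫ y in Ioi 1, y⁻¹ * ℓ (t * y) := by
    simpa using (integral_Ioi_inv_smul_comp_mul_left ℓ 1 ht).symm
  have hstar := integrableOn_lstarIntegrand ht hp hmeas hint hA
  have hsplit : lstar ℓ t =
      (∫ y in Ioc 0 1, lstarIntegrand ℓ t y) + ∫ y in Ioi 1, lstarIntegrand ℓ t y := by
    rw [lstar, ← Ioc_union_Ioi_eq_Ioi zero_le_one, setIntegral_union (Ioc_disjoint_Ioi le_rfl)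
      measurableSet_Ioi (hstar.mono_set Ioc_subset_Ioi_self)
      (hstar.mono_set (Ioi_subset_Ioi zero_le_one))]
  rw [hsplit, hscale, add_sub_assoc]
  exact (abs_add_le _ _).trans <| add_le_add
    (abs_integral_Ioc_exp_neg_one_div_mul_inv_mul_le hp hA)
    (abs_integral_Ioi_exp_neg_one_div_mul_inv_mul_sub_le hint₁ hB)

end StarTransform

section TruncLog

variable {s t u y : ℝ}

/-- The logarithm cut off from below at `1`; its power `truncLog s ^ (-u)` is the function `ℓ` of
the theorem on `(0, ∞)`. -/
noncomputable def truncLog (s : ℝ) : ℝ := max 1 (log s)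

theorem one_le_truncLog (s : ℝ) : 1 ≤ truncLog s := le_max_left _ _

theorem truncLog_pos (s : ℝ) : 0 < truncLog s := one_pos.trans_le (one_le_truncLog s)

theorem measurable_truncLog : Measurable truncLog := measurable_const.max measurable_log

theorem truncLog_of_exp_one_le (hs : exp 1 ≤ s) : truncLog s = log s :=
  max_eq_right ((le_log_iff_exp_le ((exp_pos 1).trans_le hs)).2 hs)

theorem truncLog_rpow_eq_ite (hs : 0 < s) (r : ℝ) :
    truncLog s ^ r = if exp 1 ≤ s then log s ^ r else 1 := by
  split_ifs with h
  · rw [truncLog_of_exp_one_le h]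
  · rw [truncLog, max_eq_left ((log_le_iff_le_exp hs).2 (not_le.1 h).le), one_rpow]

theorem isSlowlyVarying_truncLog : IsSlowlyVarying truncLog :=
  isSlowlyVarying_log.congr' <| (eventually_ge_atTop (exp 1)).mono fun _ ht =>
    (truncLog_of_exp_one_le ht).symm

theorem truncLog_le_truncLog (hs : 0 < s) (hst : s ≤ t) : truncLog s ≤ truncLog t :=
  max_le_max_left 1 (log_le_log hs hst)

-- Potter-type bound: `log t = log (t * y) + log y⁻¹`, where `log y⁻¹ ≤ y⁻¹ - 1`.
theorem truncLog_le_inv_mul_truncLog_mul (ht : 0 < t) (hy : 0 < y) (hy₁ : y ≤ 1) :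
    truncLog t ≤ y⁻¹ * truncLog (t * y) := by
  have hinv : 1 ≤ y⁻¹ := (one_le_inv₀ hy).2 hy₁
  have hone : 1 ≤ truncLog (t * y) := one_le_truncLog _
  refine max_le (one_le_mul_of_one_le_of_one_le hinv hone) ?_
  calc log t = log (t * y) + log y⁻¹ := by rw [log_mul ht.ne' hy.ne', log_inv]; ring
    _ ≤ truncLog (t * y) + (y⁻¹ - 1) * 1 := by
        rw [mul_one]
        exact add_le_add (le_max_right _ _) (log_le_sub_one_of_pos (inv_pos.2 hy))
    _ ≤ truncLog (t * y) + (y⁻¹ - 1) * truncLog (t * y) := by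
        gcongr
    _ = y⁻¹ * truncLog (t * y) := by ring

theorem truncLog_mul_rpow_neg_le (ht : 0 < t) (hu : 0 ≤ u) (hy : 0 < y) (hy₁ : y ≤ 1) :
    truncLog (t * y) ^ (-u) ≤ truncLog t ^ (-u) * y ^ (-u) := by
  rw [← mul_rpow (truncLog_pos t).le hy.le]
  refine rpow_le_rpow_of_nonpos (mul_pos (truncLog_pos t) hy) ?_ (neg_nonpos.2 hu)
  rw [← le_div_iff₀ hy, div_eq_inv_mul]
  exact truncLog_le_inv_mul_truncLog_mul ht hy hy₁

theorem integrableOn_Ioi_max_one_rpow {r : ℝ} (hr : r < -1) (a : ℝ) :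
    IntegrableOn (fun x : ℝ => max 1 x ^ r) (Ioi a) := by
  have hleft : IntegrableOn (fun x : ℝ => max 1 x ^ r) (Ioc a 1) :=
    (integrableOn_const (C := (1 : ℝ)) (by simp)).congr_fun
      (fun x hx => by simp only [max_eq_left hx.2, one_rpow]) measurableSet_Ioc
  have hright : IntegrableOn (fun x : ℝ => max 1 x ^ r) (Ioi 1) :=
    (integrableOn_Ioi_rpow_of_lt hr one_pos).congr_fun
      (fun x (hx : 1 < x) => by simp only [max_eq_right hx.le]) measurableSet_Ioi
  exact (hleft.union hright).mono_set fun x hx =>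
    (le_or_gt x 1).imp (fun h => ⟨hx, h⟩) id

theorem integrableOn_Ioi_inv_mul_truncLog_rpow (ht : 0 < t) {r : ℝ} (hr : r < -1) :
    IntegrableOn (fun s => s⁻¹ * truncLog s ^ r) (Ioi t) :=
  (integrableOn_comp_log_Ioi (fun x => max 1 x ^ r) ht).2 (integrableOn_Ioi_max_one_rpow hr _)

theorem integral_Ioi_inv_mul_truncLog_rpow (ht : exp 1 ≤ t) {r : ℝ} (hr : r < -1) :
    ∫ s in Ioi t, s⁻¹ * truncLog s ^ r = -log t ^ (r + 1) / (r + 1) := by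
  have ht₀ : 0 < t := (exp_pos 1).trans_le ht
  have hlog : 1 ≤ log t := (le_log_iff_exp_le ht₀).2 ht
  calc ∫ s in Ioi t, s⁻¹ * truncLog s ^ r = ∫ x in Ioi (log t), max 1 x ^ r :=
        integral_comp_log_Ioi (fun x => max 1 x ^ r) ht₀
    _ = ∫ x in Ioi (log t), x ^ r :=
        setIntegral_congr_fun measurableSet_Ioi fun x (hx : log t < x) => by
          simp only [max_eq_right (hlog.trans hx.le)]
    _ = -log t ^ (r + 1) / (r + 1) := integral_Ioi_rpow_of_lt hr (by linarith)

theorem integrableOn_lstarIntegrand_truncLog_rpow_neg (hu : 1 < u) (ht : 0 < t) :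
    IntegrableOn (lstarIntegrand (fun s => truncLog s ^ (-u)) t) (Ioi 0) := by
  refine integrableOn_lstarIntegrand ht (one_pos.trans hu) (measurable_truncLog.pow_const _)
    (integrableOn_Ioi_inv_mul_truncLog_rpow ht (by linarith)) (A := truncLog t ^ (-u)) ?_
  intro y hy
  rw [abs_of_pos (rpow_pos_of_pos (truncLog_pos _) _)]
  exact truncLog_mul_rpow_neg_le ht (by linarith) hy.1 hy.2

theorem abs_lstar_truncLog_rpow_neg_sub_le (hu : 1 < u) (ht : exp 1 ≤ t) :
    |lstar (fun s => truncLog s ^ (-u)) t - log t ^ (1 - u) / (u - 1)| ≤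
      (Gamma u + 1) * log t ^ (-u) := by
  have ht₀ : 0 < t := (exp_pos 1).trans_le ht
  have hu₀ : 0 < u := one_pos.trans hu
  have htail : ∫ s in Ioi t, s⁻¹ * truncLog s ^ (-u) = log t ^ (1 - u) / (u - 1) := by
    rw [integral_Ioi_inv_mul_truncLog_rpow ht (by linarith), neg_div, ← div_neg]
    ring_nf
  have habs (s : ℝ) : |truncLog s ^ (-u)| = truncLog s ^ (-u) :=
    abs_of_pos (rpow_pos_of_pos (truncLog_pos _) _)
  rw [← htail, ← truncLog_of_exp_one_le ht, add_one_mul, mul_comm]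
  refine abs_lstar_sub_integral_Ioi_le ht₀ hu₀ (measurable_truncLog.pow_const _)
    (integrableOn_Ioi_inv_mul_truncLog_rpow ht₀ (by linarith)) (fun y hy => ?_) (fun y hy => ?_)
  · rw [habs]
    exact truncLog_mul_rpow_neg_le ht₀ hu₀.le hy.1 hy.2
  · rw [habs]
    exact rpow_le_rpow_of_nonpos (truncLog_pos t)
      (truncLog_le_truncLog ht₀ (le_mul_of_one_le_right ht₀.le (mem_Ioi.1 hy).le)) (by linarith)

theorem abs_lstar_truncLog_rpow_neg_mul_sub_one_le (hu : 1 < u) (ht : exp 1 ≤ t) :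
    |lstar (fun s => truncLog s ^ (-u)) t * (u - 1) * log t ^ (u - 1) - 1| ≤
      (Gamma u + 1) * (u - 1) * (log t)⁻¹ := by
  have hlog : 0 < log t :=
    one_pos.trans_le ((le_log_iff_exp_le ((exp_pos 1).trans_le ht)).2 ht)
  have hu₁ : 0 < u - 1 := sub_pos.2 hu
  have hfactor : 0 < (u - 1) * log t ^ (u - 1) := by positivity
  have hmain : log t ^ (1 - u) / (u - 1) * ((u - 1) * log t ^ (u - 1)) = 1 := by
    rw [← neg_sub u 1, rpow_neg hlog.le]
    field_simp
  have herror : log t ^ (-u) * log t ^ (u - 1) = (log t)⁻¹ := by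
    rw [← rpow_add hlog, ← rpow_neg_one]
    ring_nf
  calc |lstar (fun s => truncLog s ^ (-u)) t * (u - 1) * log t ^ (u - 1) - 1|
      = |(lstar (fun s => truncLog s ^ (-u)) t - log t ^ (1 - u) / (u - 1)) *
          ((u - 1) * log t ^ (u - 1))| := by rw [sub_mul, hmain, mul_assoc]
    _ = |lstar (fun s => truncLog s ^ (-u)) t - log t ^ (1 - u) / (u - 1)| *
          ((u - 1) * log t ^ (u - 1)) := by rw [abs_mul, abs_of_pos hfactor]
    _ ≤ (Gamma u + 1) * log t ^ (-u) * ((u - 1) * log t ^ (u - 1)) := by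
        gcongr
        exact abs_lstar_truncLog_rpow_neg_sub_le hu ht
    _ = (Gamma u + 1) * (u - 1) * (log t)⁻¹ := by rw [← herror]; ring

theorem tendsto_lstar_truncLog_rpow_neg_mul (hu : 1 < u) :
    Tendsto (fun t => lstar (fun s => truncLog s ^ (-u)) t * (u - 1) * log t ^ (u - 1))
      atTop (𝓝 1) := by
  rw [tendsto_iff_norm_sub_tendsto_zero]
  have hbound : Tendsto (fun t => (Gamma u + 1) * (u - 1) * (log t)⁻¹) atTop (𝓝 0) := by
    simpa using (tendsto_inv_atTop_zero.comp tendsto_log_atTop).const_mul ((Gamma u + 1) * (u - 1))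
  refine squeeze_zero' (.of_forall fun _ => norm_nonneg _) ?_ hbound
  filter_upwards [eventually_ge_atTop (exp 1)] with t ht
  exact abs_lstar_truncLog_rpow_neg_mul_sub_one_le hu ht

end TruncLog

/-- For `u > 1` and `ℓ(s) = (log s)^{-u}` for `s ≥ e`, `ℓ(s) = 1` for `0 < s < e`:
`ℓ` is slowly varying at `∞`, `ℓ*(t) = ∫₀^∞ e^{-1/y} y^{-1} ℓ(ty) dy` converges for
every `t > 0`, and `ℓ*(t) (u-1) (log t)^{u-1} → 1` as `t → ∞`. -/
theorem lstar_log_power (u : ℝ) (hu : 1 < u)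
    (ℓ : ℝ → ℝ)
    (hℓ_def : ∀ s : ℝ, 0 < s →
      ℓ s = if Real.exp 1 ≤ s then (Real.log s) ^ (-u) else 1) :
    (∀ c : ℝ, 0 < c → Tendsto (fun t : ℝ => ℓ (c * t) / ℓ t) atTop (nhds 1)) ∧
    (∀ t : ℝ, 0 < t →
      IntegrableOn (fun y : ℝ => Real.exp (-1 / y) * y⁻¹ * ℓ (t * y)) (Set.Ioi 0)) ∧
    Tendsto (fun t : ℝ =>
        (∫ y in Set.Ioi (0 : ℝ), Real.exp (-1 / y) * y⁻¹ * ℓ (t * y)) *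
          (u - 1) * (Real.log t) ^ (u - 1))
      atTop (nhds 1) := by
  have hℓ : EqOn (fun s => truncLog s ^ (-u)) ℓ (Ioi 0) := fun s hs => by
    rw [hℓ_def s hs, ← truncLog_rpow_eq_ite hs]
  have hslow : IsSlowlyVarying ℓ :=
    (isSlowlyVarying_truncLog.rpow_const (.of_forall fun s => (truncLog_pos s).le) (-u)).congr'
      ((eventually_gt_atTop 0).mono hℓ)
  refine ⟨hslow, fun t ht => ?_, ?_⟩
  · exact (integrableOn_lstarIntegrand_truncLog_rpow_neg hu ht).congr_fun
      (lstarIntegrand_eqOn hℓ ht) measurableSet_Ioi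
  · refine (tendsto_lstar_truncLog_rpow_neg_mul hu).congr' ?_
    filter_upwards [eventually_gt_atTop 0] with t ht
    rw [lstar_congr hℓ ht]
    rfl
end

section
/- Let ℓ : (0,∞) → (0,∞) be a measurable function that is slowly varying at ∞ (i.e., for every c > 0, ℓ(ct)/ℓ(t) → 1 as t → ∞), and assume that the integral ℓ*(t) = ∫₀^∞ e^{−1/y} y^{−1} ℓ(ty) dy converges for all sufficiently large t. Then ℓ*(t)/ℓ(t) → ∞ as t → ∞. -/
open Filter MeasureTheory Real

/-!
Divide by `ℓ t` under the integral sign: the integrands `e^{-1/y} y⁻¹ ℓ(ty) / ℓ(t)` are nonnegative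
and converge pointwise to `e^{-1/y} y⁻¹`, which behaves like `y⁻¹` at infinity and hence is not
integrable. By Fatou's lemma a bounded subsequence of integrals would make the limit integrable.
-/

open Asymptotics Set Topology

theorem tendsto_integral_atTop_of_not_integrable {ι α : Type*} [MeasurableSpace α]
    {μ : Measure α} {l : Filter ι} [l.IsCountablyGenerated] {F : ι → α → ℝ} {f : α → ℝ}
    (hF_int : ∀ᶠ i in l, Integrable (F i) μ) (hF_nonneg : ∀ᶠ i in l, 0 ≤ᵐ[μ] F i)
    (hlim : ∀ᵐ a ∂μ, Tendsto (fun i ↦ F i a) l (𝓝 (f a))) (hf : ¬Integrable f μ) :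
    Tendsto (fun i ↦ ∫ a, F i a ∂μ) l atTop := by
  contrapose! hf with not_tendsto
  obtain ⟨C, hC⟩ : ∃ C, ∃ᶠ i in l, ∫ a, F i a ∂μ < C := by
    simpa only [tendsto_atTop, not_forall, not_eventually, not_le] using not_tendsto
  obtain ⟨u, hu, hFu⟩ :=
    exists_seq_forall_of_frequently (hC.and_eventually (hF_int.and hF_nonneg))
  have hlim_u : ∀ᵐ a ∂μ, Tendsto (fun n ↦ F (u n) a) atTop (𝓝 (f a)) :=
    hlim.mono fun a ha ↦ ha.comp hu
  have hF_meas (n : ℕ) : AEStronglyMeasurable (F (u n)) μ := (hFu n).2.1.aestronglyMeasurable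
  have hF_le (n : ℕ) : ∫⁻ a, ‖F (u n) a‖ₑ ∂μ ≤ ENNReal.ofReal C := by
    obtain ⟨hlt, hint, hnonneg⟩ := hFu n
    rw [← ofReal_integral_norm_eq_lintegral_enorm hint,
      integral_congr_ae (hnonneg.mono fun a ha ↦ norm_of_nonneg ha)]
    exact ENNReal.ofReal_le_ofReal hlt.le
  refine ⟨aestronglyMeasurable_of_tendsto_ae atTop hF_meas hlim_u, ?_⟩
  calc ∫⁻ a, ‖f a‖ₑ ∂μ
      = ∫⁻ a, liminf (fun n ↦ ‖F (u n) a‖ₑ) atTop ∂μ :=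
        lintegral_congr_ae (hlim_u.mono fun a ha ↦ ha.enorm.liminf_eq.symm)
    _ ≤ liminf (fun n ↦ ∫⁻ a, ‖F (u n) a‖ₑ ∂μ) atTop :=
        lintegral_liminf_le' fun n ↦ (hF_meas n).enorm
    _ ≤ ENNReal.ofReal C := liminf_le_of_frequently_le' (.of_forall hF_le)
    _ < ⊤ := ENNReal.ofReal_lt_top

theorem not_integrableOn_Ioi_of_inv_isBigO {E : Type*} [NormedAddCommGroup E] {f : ℝ → E}
    (hf : (fun y : ℝ ↦ y⁻¹) =O[atTop] f) (a : ℝ) : ¬IntegrableOn f (Ioi a) := by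
  intro hint
  have hf_top : IntegrableAtFilter f atTop := ⟨Ioi a, Ioi_mem_atTop a, hint⟩
  have hinv_meas : StronglyMeasurableAtFilter (fun y : ℝ ↦ y⁻¹) atTop :=
    measurable_inv.stronglyMeasurable.stronglyMeasurableAtFilter
  obtain ⟨b, hb⟩ := integrableAtFilter_atTop_iff.1 (hf.integrableAtFilter hinv_meas hf_top)
  exact not_integrableOn_Ioi_inv (hb.mono_set Ioi_subset_Ici_self)

theorem exp_neg_one_div_mul_inv_isEquivalent_inv :
    (fun y : ℝ ↦ exp (-1 / y) * y⁻¹) ~[atTop] fun y ↦ y⁻¹ := by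
  refine isEquivalent_iff_exists_eq_mul.2 ⟨fun y ↦ exp (-1 / y), ?_, .rfl⟩
  simpa only [exp_zero, id] using (tendsto_const_nhds.div_atTop tendsto_id).rexp

theorem lstar_dominates_ell_general {k ℓ φ : ℝ → ℝ} (hk : ∀ y, 0 < y → 0 ≤ k y)
    (hℓ : ∀ t, 0 < t → 0 ≤ ℓ t)
    (hφ : ∀ c, 0 < c → Tendsto (fun t ↦ ℓ (c * t) / ℓ t) atTop (𝓝 (φ c)))
    (hkφ : ¬IntegrableOn (fun y ↦ k y * φ y) (Ioi 0))
    (hconv : ∀ᶠ t in atTop, IntegrableOn (fun y ↦ k y * ℓ (t * y)) (Ioi 0)) :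
    Tendsto (fun t ↦ (∫ y in Ioi 0, k y * ℓ (t * y)) / ℓ t) atTop atTop := by
  simp only [← integral_div]
  refine tendsto_integral_atTop_of_not_integrable (f := fun y ↦ k y * φ y)
    (hconv.mono fun t ht ↦ ht.div_const _) ?nonneg ?lim hkφ
  case nonneg =>
    filter_upwards [eventually_gt_atTop 0] with t ht
    filter_upwards [ae_restrict_mem measurableSet_Ioi] with y hy
    exact div_nonneg (mul_nonneg (hk y hy) (hℓ _ (mul_pos ht hy))) (hℓ t ht)
  case lim =>
    filter_upwards [ae_restrict_mem measurableSet_Ioi] with y hy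
    simpa only [mul_div_assoc, mul_comm y] using (hφ y hy).const_mul (k y)

/-- If `ℓ : (0,∞) → (0,∞)` is measurable and slowly varying at `∞`, and
`ℓ*(t) = ∫₀^∞ e^{-1/y} y^{-1} ℓ(ty) dy` converges for all sufficiently large `t`,
then `ℓ*(t)/ℓ(t) → ∞` as `t → ∞`. -/
theorem lstar_dominates_ell (ℓ : ℝ → ℝ) (hmeas : Measurable ℓ)
    (hℓpos : ∀ t : ℝ, 0 < t → 0 < ℓ t)
    (hℓsv : ∀ c : ℝ, 0 < c → Tendsto (fun t : ℝ => ℓ (c * t) / ℓ t) atTop (nhds 1))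
    (hconv : ∀ᶠ t : ℝ in atTop,
      IntegrableOn (fun y : ℝ => Real.exp (-1 / y) * y⁻¹ * ℓ (t * y)) (Set.Ioi 0)) :
    Tendsto (fun t : ℝ =>
        (∫ y in Set.Ioi (0 : ℝ), Real.exp (-1 / y) * y⁻¹ * ℓ (t * y)) / ℓ t)
      atTop atTop := by
  have kernel_not_integrable : ¬IntegrableOn (fun y : ℝ ↦ exp (-1 / y) * y⁻¹ * 1) (Ioi 0) := by
    simpa only [mul_one] using
      not_integrableOn_Ioi_of_inv_isBigO exp_neg_one_div_mul_inv_isEquivalent_inv.isBigO_symm 0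
  exact lstar_dominates_ell_general (fun y hy ↦ by positivity) (fun t ht ↦ (hℓpos t ht).le) hℓsv
    kernel_not_integrable hconv
end
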